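/- arXiv:1610.03301 — 8 statements merged into one kernel-verified Lean document; each statement's English description precedes it below -/
import Mathlib

section
/- Dixon's theorem (counting form): the proportion of pairs of permutations of k points that generate the full symmetric group or the alternating group tends to 1 as k tends to infinity. Formally, the sequence k ↦ (Nat.card {p : Equiv.Perm (Fin k) × Equiv.Perm (Fin k) // Subgroup.closure {p.1, p.2} = ⊤ ∨ Subgroup.closure {p.1, p.2} = alternatingGroup (Fin k)} : ℝ) / (k !)^2 tends to 1 as k → ∞. -/
section DixonProof
open Equiv MulAction

theorem comm_threeCycle {α : Type*} [Fintype α] [DecidableEq α] (c d : Perm α) (a : α)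
    (hc : c a ≠ a) (hd : d a ≠ a) (h : ∀ x, c x ≠ x → d x ≠ x → x = a) :
    (c * d * c⁻¹ * d⁻¹).IsThreeCycle := by
  have key : c * d * c⁻¹ * d⁻¹ = swap a (d a) * swap a (c a) := by
    have hcd : ∀ x, x ≠ a → c x = x ∨ d x = x := by
      intro x hx; by_contra! hh; exact hx (h x hh.1 hh.2)
    have e : c * d = swap a (d a) * swap a (c a) * (d * c) := by
      ext x
      simp only [Perm.mul_apply]
      by_cases hxa : x = a
      · subst hxa
        have h1 : d (c x) = c x := (hcd _ hc).resolve_left (fun hh => hc (c.injective hh))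
        have h2 : c (d x) = d x := (hcd _ hd).resolve_right (fun hh => hd (d.injective hh))
        rw [h1, h2]; simp
      · rcases hcd x hxa with h1 | h1
        · rw [h1]
          by_cases h3 : d x = a
          · have : c x ≠ a := by
              rw [h1]; exact hxa
            rw [h3, swap_apply_left, swap_apply_of_ne_of_ne hc]
            intro hh
            have h4 : d (c a) = c a := (hcd _ hc).resolve_left (fun hh => hc (c.injective hh))
            rw [hh] at h4; exact hd (d.injective h4)
          · have h5 : c (d x) = d x := by
              by_cases h6 : d x = x
              · rw [h6, h1]
              · exact (hcd _ h3).resolve_right (fun hh => h6 (d.injective hh))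
            have h6 : d x ≠ c a := by
              intro hh
              rw [hh] at h5
              exact hc (c.injective h5)
            rw [h5, swap_apply_of_ne_of_ne h3 h6, swap_apply_of_ne_of_ne h3]
            exact fun hh => hxa (d.injective hh)
        · rw [h1]
          by_cases h3 : c x = a
          · have h2 : c (d a) = d a := (hcd _ hd).resolve_right (fun hh => hd (d.injective hh))
            have h7 : d a ≠ c a := by
              intro hh
              rw [hh] at h2; exact hc (c.injective h2)
            rw [h3]
            rw [swap_apply_of_ne_of_ne hd h7, swap_apply_right]
          · have h5 : d (c x) = c x := by
              by_cases h6 : c x = x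
              · rw [h6, h1]
              · exact (hcd _ h3).resolve_left (fun hh => h6 (c.injective hh))
            have h6 : c x ≠ d a := by
              intro hh
              rw [hh] at h5
              exact hd (d.injective h5)
            rw [h5, swap_apply_of_ne_of_ne h3 (fun hh => hxa (c.injective hh)),
              swap_apply_of_ne_of_ne h3 h6]
    have : c * d * c⁻¹ * d⁻¹ = c * d * (d * c)⁻¹ := by group
    rw [this, e]; group
  rw [key]
  refine Perm.isThreeCycle_swap_mul_swap_same hd.symm hc.symm ?_
  intro hh
  refine hd (d.injective ?_)
  by_contra h1
  exact hd (h (d a) (by rw [hh]; exact fun h2 => hc (c.injective h2)) h1)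

theorem jordan_prime {α : Type*} [Fintype α] [DecidableEq α] (G : Subgroup (Perm α))
    (hG : IsPreprimitive G α) (c : Perm α) (hc : c.IsCycle) (hcG : c ∈ G)
    (hp : c.support.card.Prime) (h2 : 2 * c.support.card ≤ Fintype.card α) :
    alternatingGroup α ≤ G := by
  set p := c.support.card with hpdef
  have hp2 := hp.two_le
  have hcard : ((c.support : Set α)ᶜ).ncard = Fintype.card α - p := by
    rw [Set.ncard_compl, Set.ncard_coe_finset, Nat.card_eq_fintype_card]
  have htr := Perm.isPretransitive_of_isCycle_mem hc hcG
  have hprim : IsPreprimitive (fixingSubgroup G (c.support : Set α)ᶜ)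
      (SubMulAction.ofFixingSubgroup G (c.support : Set α)ᶜ) := by
    apply IsPreprimitive.of_prime_card
    convert! hp
    change Nat.card (SubMulAction.ofFixingSubgroup G (c.support : Set α)ᶜ).carrier = p
    rw [Nat.card_coe_set_eq, SubMulAction.ofFixingSubgroup_carrier, compl_compl,
      Set.ncard_coe_finset]
  have hmul := hG.isMultiplyPreprimitive (n := Fintype.card α - p - 1) (hcard.trans (by omega))
    (by rw [Nat.card_eq_fintype_card]; omega) hprim
  have hmt : IsMultiplyPretransitive G α (Fintype.card α - p - 1 + 2) := hmul.isMultiplyPretransitive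
  have hmp : IsMultiplyPretransitive G α p :=
    isMultiplyPretransitive_of_le (n := Fintype.card α - p - 1 + 2) (by omega)
      (by rw [Nat.card_eq_fintype_card]; omega)
  obtain ⟨a, ha⟩ : c.support.Nonempty := Finset.card_pos.mp hp.pos
  -- target set
  have hle : p ≤ (c.supportᶜ).card := by rw [Finset.card_compl]; omega
  obtain ⟨T, hT, hTc⟩ := Finset.exists_subset_card_eq (n := p - 1) (s := c.supportᶜ) (by omega)
  have haT : a ∉ T := fun h => by simpa [ha] using hT h
  have hTc' : (insert a T).card = p := by rw [Finset.card_insert_of_notMem haT]; omega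
  let e1 : Fin p ≃ c.support := (Finset.equivFin c.support).symm
  let e2 : Fin p ≃ (insert a T : Finset α) := (finCongr hTc'.symm).trans (Finset.equivFin _).symm
  let f1 : Fin p ↪ α := e1.toEmbedding.trans (Function.Embedding.subtype _)
  let f2 : Fin p ↪ α := e2.toEmbedding.trans (Function.Embedding.subtype _)
  obtain ⟨g, hg⟩ := hmp.exists_smul_eq f1 f2
  have hg' : ∀ t, (g : Perm α) (f1 t) = f2 t := fun t => DFunLike.congr_fun hg t
  have himg : ∀ x, x ∈ c.support ↔ (g : Perm α) x ∈ insert a T := by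
    have h1 : c.support.image (g : Perm α) = insert a T := by
      apply Finset.eq_of_subset_of_card_le
      · intro y hy
        obtain ⟨x, hx, rfl⟩ := Finset.mem_image.mp hy
        have := hg' (e1.symm ⟨x, hx⟩)
        have h3 : f1 (e1.symm ⟨x, hx⟩) = x := by simp [f1]
        rw [h3] at this
        rw [this]
        exact (e2 _).2
      · rw [Finset.card_image_of_injective _ (g : Perm α).injective, hTc']
    intro x
    rw [← h1, Finset.mem_image]
    constructor
    · intro h; exact ⟨x, h, rfl⟩
    · rintro ⟨y, hy, hxy⟩; rwa [← (g : Perm α).injective hxy]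
  set d : Perm α := g * c * (g : Perm α)⁻¹ with hd
  have hdG : d ∈ G := G.mul_mem (G.mul_mem g.2 hcG) (G.inv_mem g.2)
  have hdx : ∀ x, d x ≠ x ↔ x ∈ insert a T := by
    intro x
    have := himg ((g : Perm α)⁻¹ x)
    rw [Perm.mem_support] at this
    rw [show (g : Perm α) ((g : Perm α)⁻¹ x) = x by simp] at this
    rw [← this, hd]
    simp only [Perm.mul_apply, ne_eq]
    rw [Perm.eq_inv_iff_eq]
  refine Perm.alternatingGroup_le_of_isPreprimitive_of_isThreeCycle_mem hG
    (comm_threeCycle c d a (Perm.mem_support.mp ha) ((hdx a).2 (by simp)) ?_)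
    (G.mul_mem (G.mul_mem (G.mul_mem hcG hdG) (G.inv_mem hcG)) (G.inv_mem hdG))
  intro x hx hx2
  rcases Finset.mem_insert.mp ((hdx x).1 hx2) with h | h
  · exact h
  · have := hT h
    simp [hx] at this

theorem closure_eq_of_le {α : Type*} [Fintype α] [DecidableEq α] (G : Subgroup (Perm α))
    (h : alternatingGroup α ≤ G) : G = ⊤ ∨ G = alternatingGroup α := by
  by_cases h1 : G ≤ alternatingGroup α
  · exact Or.inr (le_antisymm h1 h)
  · left
    obtain ⟨x, hx, hx2⟩ := SetLike.not_le_iff_exists.mp h1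
    rw [Perm.mem_alternatingGroup] at hx2
    have hx3 : Perm.sign x = -1 := (Int.units_eq_one_or _).resolve_left hx2
    rw [eq_top_iff]
    intro y _
    rcases Int.units_eq_one_or (Perm.sign y) with hy | hy
    · exact h (Perm.mem_alternatingGroup.mpr hy)
    · have : y * x ∈ G := h (Perm.mem_alternatingGroup.mpr (by simp [hx3, hy]))
      simpa using G.mul_mem this (G.inv_mem hx)

/-- Pairs simultaneously conjugate into `H`. -/
theorem conj_pairs_card {G : Type*} [Group G] [Fintype G] (H : Subgroup G) :
    {p : G × G | ∃ s : G, s⁻¹ * p.1 * s ∈ H ∧ s⁻¹ * p.2 * s ∈ H}.ncard * H.index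
      ≤ Nat.card G ^ 2 := by
  classical
  set A : Finset (G × G) := Finset.univ.filter
    (fun p => ∃ s : G, s⁻¹ * p.1 * s ∈ H ∧ s⁻¹ * p.2 * s ∈ H) with hA
  have hAn : {p : G × G | ∃ s : G, s⁻¹ * p.1 * s ∈ H ∧ s⁻¹ * p.2 * s ∈ H}.ncard = A.card := by
    rw [← Set.ncard_coe_finset]; congr 1; ext p; simp [hA]
  rw [hAn]
  set h := Nat.card H with hh
  have hpos : 0 < h := Nat.card_pos
  let r : G × G → G → Prop := fun p s => s⁻¹ * p.1 * s ∈ H ∧ s⁻¹ * p.2 * s ∈ H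
  have hHc : ((Finset.univ : Finset G).filter (· ∈ H)).card = h := by
    rw [hh, Nat.card_eq_fintype_card, Fintype.card_subtype]
  have key : A.card * h ≤ (Finset.univ : Finset G).card * (h * h) := by
    apply Finset.card_mul_le_card_mul r
    · intro p hp
      obtain ⟨s, hs1, hs2⟩ := (Finset.mem_filter.mp hp).2
      rw [← hHc]
      apply Finset.card_le_card_of_injOn (fun t => s * t)
      · intro t ht
        have ht : t ∈ H := by simpa using ht
        simp only [Finset.coe_bipartiteAbove, Set.mem_ofPred_eq,
          Finset.mem_univ, true_and, r]
        constructor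
        · have := H.mul_mem (H.mul_mem (H.inv_mem ht) hs1) ht
          convert this using 1; group
        · have := H.mul_mem (H.mul_mem (H.inv_mem ht) hs2) ht
          convert this using 1; group
      · intro x _ y _ hxy
        exact mul_left_cancel hxy
    · intro s _
      rw [← hHc, ← Finset.card_product]
      apply Finset.card_le_card_of_injOn (fun p => (s⁻¹ * p.1 * s, s⁻¹ * p.2 * s))
      · intro p hp
        have hp2 := (Finset.mem_filter.mp (Finset.mem_coe.mp hp)).2
        simpa using hp2
      · rintro ⟨x1, x2⟩ _ ⟨y1, y2⟩ _ hxy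
        simpa using hxy
  have hGc : Nat.card G = h * H.index := (H.card_mul_index).symm
  have : (Finset.univ : Finset G).card = Nat.card G := by simp
  rw [this] at key
  have key2 : A.card ≤ Nat.card G * h := by
    apply Nat.le_of_mul_le_mul_right _ hpos
    linarith
  calc A.card * H.index ≤ Nat.card G * h * H.index := Nat.mul_le_mul_right _ key2
    _ = Nat.card G ^ 2 := by rw [mul_assoc, ← hGc, sq]

theorem conj_pairs_card_div {G : Type*} [Group G] [Fintype G] (H : Subgroup G) (k : ℕ)
    (hk : 0 < k) (hH : k ≤ H.index) :
    ({p : G × G | ∃ s : G, s⁻¹ * p.1 * s ∈ H ∧ s⁻¹ * p.2 * s ∈ H}.ncard : ℝ)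
      ≤ (Nat.card G : ℝ) ^ 2 * (1 / k) := by
  have h := conj_pairs_card H
  have h2 := (Nat.mul_le_mul_left _ hH).trans h
  rw [mul_one_div, le_div_iff₀ (by exact_mod_cast hk)]
  exact_mod_cast h2

theorem le_index {G T : Type*} [Group G] [Finite G] [Fintype T] (H : Subgroup G) (s : T → G)
    (hs : ∀ t t', (s t)⁻¹ * s t' ∈ H → t = t') : Fintype.card T ≤ H.index := by
  rw [← Nat.card_eq_fintype_card, Subgroup.index]
  apply Nat.card_le_card_of_injective (fun t => (s t : G ⧸ H))
  intro t t' h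
  exact hs t t' (QuotientGroup.eq.mp h)

theorem exists_perm_image {α : Type*} [Fintype α] [DecidableEq α] (S T : Finset α)
    (h : S.card = T.card) : ∃ s : Perm α, ∀ x, x ∈ S ↔ s x ∈ T := by
  let e : {x // x ∈ S} ≃ {x // x ∈ T} := Finset.equivOfCardEq h
  refine ⟨e.extendSubtype, fun x => ⟨fun hx => e.extendSubtype_mem x hx, fun hx => ?_⟩⟩
  by_contra hn
  exact e.extendSubtype_not_mem x hn hx

/-- setwise stabilizer -/
def setStab {α : Type*} (S : Finset α) : Subgroup (Perm α) where
  carrier := {x | ∀ i, i ∈ S ↔ x i ∈ S}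
  mul_mem' := by
    intro x y hx hy i
    rw [Perm.mul_apply, hy i, hx (y i)]
  one_mem' := by simp
  inv_mem' := by
    intro x hx i
    have := hx (x⁻¹ i)
    simpa using this.symm

theorem setStab_index {α : Type*} [Fintype α] [DecidableEq α] (S : Finset α) :
    (Fintype.card α).choose S.card ≤ (setStab S).index := by
  have h := fun T : {T : Finset α // T ∈ Finset.powersetCard S.card Finset.univ} =>
    exists_perm_image S T.1 (Finset.mem_powersetCard.mp T.2).2.symm
  choose s hs using h
  have := le_index (setStab S) s (by
    intro T T' h
    apply Subtype.ext
    ext x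
    have h1 := h ((s T')⁻¹ x)
    simp only [Perm.mul_apply] at h1
    rw [hs T' , hs T] at h1
    simpa using h1.symm)
  rwa [Fintype.card_coe, Finset.card_powersetCard, Finset.card_univ] at this

/-- stabilizer of the kernel of a map -/
def kerStab {α γ : Type*} (q : α → γ) : Subgroup (Perm α) where
  carrier := {x | ∀ i j, q i = q j ↔ q (x i) = q (x j)}
  mul_mem' := by
    intro x y hx hy i j
    rw [Perm.mul_apply, Perm.mul_apply, hy i j, hx (y i)]
  one_mem' := by simp
  inv_mem' := by
    intro x hx i j
    have := hx (x⁻¹ i) (x⁻¹ j)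
    simpa using this.symm

theorem kerStab_index {α γ : Type*} [Fintype α] [DecidableEq α] [DecidableEq γ] (q : α → γ) (a : α) (d : ℕ)
    (hd : (Finset.univ.filter (fun x => q x = q a)).card = d + 1) :
    (Fintype.card α - 1).choose d ≤ (kerStab q).index := by
  set S := Finset.univ.filter (fun x => q x = q a) with hS
  have h : ∀ T : {T : Finset α // T ∈ Finset.powersetCard d (Finset.univ.erase a)},
      ∃ s : Perm α, ∀ x, x ∈ S ↔ s x ∈ insert a T.1 := by
    intro T
    obtain ⟨h1, h2⟩ := Finset.mem_powersetCard.mp T.2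
    apply exists_perm_image
    rw [Finset.card_insert_of_notMem, h2, hd]
    intro h; simpa using h1 h
  choose s hs using h
  have key : ∀ T T', (s T)⁻¹ * s T' ∈ kerStab q → T'.1 ⊆ T.1 := by
    intro T T' h x hx
    have hxa : x ≠ a := fun h => by
      have := (Finset.mem_powersetCard.mp T'.2).1 hx
      simp [h] at this
    have h1 := h ((s T')⁻¹ x) ((s T')⁻¹ a)
    simp only [Perm.mul_apply] at h1
    have h2 := hs T' ((s T')⁻¹ x)
    have h3 := hs T' ((s T')⁻¹ a)
    have h4 := hs T ((s T)⁻¹ x)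
    have h5 := hs T ((s T)⁻¹ a)
    simp [hS, hx, hxa] at h1 h2 h3 h4 h5
    rw [← h4]
    exact (h1.mp (h2.trans h3.symm)).trans h5
  have := le_index (kerStab q) s (by
    intro T T' h
    apply Subtype.ext
    refine (Finset.eq_of_subset_of_card_le (key T T' h) ?_).symm
    rw [(Finset.mem_powersetCard.mp T.2).2, (Finset.mem_powersetCard.mp T'.2).2])
  rwa [Fintype.card_coe, Finset.card_powersetCard, Finset.card_erase_of_mem (Finset.mem_univ _), Finset.card_univ] at this

open scoped Pointwise

theorem exists_perm_ker {α γ γ' : Type*} [Fintype α] [DecidableEq α] [Fintype γ] [Fintype γ']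
    [DecidableEq γ] [DecidableEq γ']
    (q : α → γ) (q' : α → γ') (d : ℕ) (hd : 0 < d)
    (h : ∀ c, Fintype.card {x // q x = c} = d) (h' : ∀ c, Fintype.card {x // q' x = c} = d) :
    ∃ (s : Perm α) (π : γ ≃ γ'), ∀ x, q' (s x) = π (q x) := by
  have hc : Fintype.card γ * d = Fintype.card α := by
    rw [← Fintype.card_congr (Equiv.sigmaFiberEquiv q), Fintype.card_sigma]
    simp [h]
  have hc' : Fintype.card γ' * d = Fintype.card α := by
    rw [← Fintype.card_congr (Equiv.sigmaFiberEquiv q'), Fintype.card_sigma]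
    simp [h']
  have π : γ ≃ γ' := Fintype.equivOfCardEq (Nat.eq_of_mul_eq_mul_right hd (hc.trans hc'.symm))
  have F : ∀ c, {x // q x = c} ≃ {x // q' x = π c} := fun c =>
    Fintype.equivOfCardEq ((h c).trans (h' _).symm)
  refine ⟨(Equiv.sigmaFiberEquiv q).symm.trans ((Equiv.sigmaCongr π F).trans
    (Equiv.sigmaFiberEquiv q')), π, ?_⟩
  intro x
  exact (F (q x) ⟨x, rfl⟩).2

theorem setStab_pairs {α : Type*} [Fintype α] [DecidableEq α] (i : ℕ) (hi : i ≤ Fintype.card α) :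
    ({p : Perm α × Perm α | ∃ S : Finset α, S.card = i ∧ p.1 ∈ setStab S ∧ p.2 ∈ setStab S}.ncard : ℝ)
      ≤ ((Fintype.card α).factorial : ℝ) ^ 2 * (1 / (Fintype.card α).choose i) := by
  obtain ⟨S₀, -, hS₀⟩ := Finset.exists_subset_card_eq (n := i) (s := (Finset.univ : Finset α)) (by simpa using hi)
  have h := conj_pairs_card_div (setStab S₀) ((Fintype.card α).choose i) (Nat.choose_pos hi)
    (hS₀ ▸ setStab_index S₀)
  rw [Nat.card_perm, Nat.card_eq_fintype_card] at h
  refine le_trans ?_ h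
  norm_cast
  apply Set.ncard_le_ncard _ (Set.toFinite _)
  rintro ⟨x, y⟩ ⟨S, hS, hx, hy⟩
  obtain ⟨s, hs⟩ := exists_perm_image S₀ S (hS₀.trans hS.symm)
  refine ⟨s, ?_, ?_⟩
  · intro i
    simp only [Perm.mul_apply]
    rw [hs, hs, hx (s i)]
    simp
  · intro i
    simp only [Perm.mul_apply]
    rw [hs, hs, hy (s i)]
    simp

open Classical in
theorem kerStab_pairs {α : Type*} [Fintype α] [Nonempty α] (d : ℕ)
    (hd : d + 1 ≤ Fintype.card α) :
    ({p : Perm α × Perm α | ∃ r : Setoid α, (∀ c : Quotient r, Fintype.card {x // Quotient.mk r x = c} = d + 1) ∧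
        p.1 ∈ kerStab (Quotient.mk r) ∧ p.2 ∈ kerStab (Quotient.mk r)}.ncard : ℝ)
      ≤ ((Fintype.card α).factorial : ℝ) ^ 2 * (1 / (Fintype.card α - 1).choose d) := by
  by_cases hr : ∃ r : Setoid α, (∀ c : Quotient r, Fintype.card {x // Quotient.mk r x = c} = d + 1)
  · obtain ⟨r₀, hr₀⟩ := hr
    obtain ⟨a⟩ := ‹Nonempty α›
    have h := conj_pairs_card_div (kerStab (Quotient.mk r₀)) ((Fintype.card α - 1).choose d)
      (Nat.choose_pos (by omega)) (kerStab_index (Quotient.mk r₀) a d (by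
        rw [← Fintype.card_subtype]; exact hr₀ _))
    rw [Nat.card_perm, Nat.card_eq_fintype_card] at h
    refine le_trans ?_ h
    norm_cast
    apply Set.ncard_le_ncard _ (Set.toFinite _)
    rintro ⟨x, y⟩ ⟨r, hr, hx, hy⟩
    obtain ⟨s, π, hs⟩ := exists_perm_ker (Quotient.mk r₀) (Quotient.mk r) (d + 1) (by omega) hr₀ hr
    have key : ∀ i j, Quotient.mk r₀ i = Quotient.mk r₀ j ↔ Quotient.mk r (s i) = Quotient.mk r (s j) := by
      intro i j
      rw [hs, hs, π.injective.eq_iff]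
    refine ⟨s, ?_, ?_⟩
    · intro i j
      simp only [Perm.mul_apply]
      rw [key, key, hx (s i)]
      simp
    · intro i j
      simp only [Perm.mul_apply]
      rw [key, key, hy (s i)]
      simp
  · have : {p : Perm α × Perm α | ∃ r : Setoid α, (∀ c : Quotient r, Fintype.card {x // Quotient.mk r x = c} = d + 1) ∧
        p.1 ∈ kerStab (Quotient.mk r) ∧ p.2 ∈ kerStab (Quotient.mk r)} = ∅ := by
      apply Set.eq_empty_of_forall_notMem
      rintro p ⟨r, h, -⟩
      exact hr ⟨r, h⟩
    rw [this]
    simp only [Set.ncard_empty, Nat.cast_zero]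
    positivity

open Classical in
theorem not_preprimitive {α : Type*} [Fintype α] [Nonempty α] (G : Subgroup (Perm α))
    (hG : ¬ IsPreprimitive G α) :
    (∃ i ∈ Finset.Ico 1 (Fintype.card α), ∃ S : Finset α, S.card = i ∧ G ≤ setStab S) ∨
    (∃ d ∈ Finset.Ico 1 (Fintype.card α - 1), ∃ r : Setoid α,
      (∀ c : Quotient r, Fintype.card {x // Quotient.mk r x = c} = d + 1) ∧
      G ≤ kerStab (Quotient.mk r)) := by
  by_cases ht : IsPretransitive G α
  · right
    have : ∃ B : Set α, IsBlock G B ∧ ¬ IsTrivialBlock B := by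
      by_contra! hcon
      exact hG { toIsPretransitive := ht, isTrivialBlock_of_isBlock := fun {B} hB => hcon B hB }
    obtain ⟨B, hB, hBt⟩ := this
    rw [IsTrivialBlock, not_or] at hBt
    obtain ⟨hB1, hB2⟩ := hBt
    have hBn : 1 < B.ncard := by
      rw [Set.not_subsingleton_iff] at hB1
      exact (Set.one_lt_ncard (Set.toFinite _)).mpr hB1
    have hBn2 : B.ncard < Fintype.card α := by
      rw [← Nat.card_eq_fintype_card, ← Set.ncard_univ]
      exact Set.ncard_lt_ncard (Set.ssubset_univ_iff.mpr hB2) (Set.toFinite _)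
    obtain ⟨b, hb⟩ : B.Nonempty := by
      rw [← Set.ncard_pos]; omega
    let q : α → Set G := fun i => {g | i ∈ g • B}
    have hcov : ∀ i : α, ∃ g : G, i ∈ g • B := by
      intro i
      obtain ⟨g, hg⟩ := ht.exists_smul_eq b i
      exact ⟨g, hg ▸ Set.smul_mem_smul_set hb⟩
    have hq : ∀ i j (g : G), i ∈ g • B → (q j = q i ↔ j ∈ g • B) := by
      intro i j g hi
      constructor
      · intro h
        have : g ∈ q i := hi
        rw [← h] at this
        exact this
      · intro hj
        ext g'
        have aux : ∀ i j : α, i ∈ g • B → j ∈ g • B → i ∈ g' • B → j ∈ g' • B := by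
          intro i j hi hj hi'
          have : g • B = g' • B := by
            by_contra hne
            exact Set.disjoint_left.mp (hB hne) hi hi'
          rwa [← this]
        exact ⟨aux j i hj hi, aux i j hi hj⟩
    refine ⟨B.ncard - 1, Finset.mem_Ico.mpr ⟨by omega, by omega⟩, Setoid.ker q, ?_, ?_⟩
    · intro c
      obtain ⟨i, rfl⟩ := Quotient.exists_rep c
      obtain ⟨g, hg⟩ := hcov i
      have h1 : Fintype.card {x // Quotient.mk (Setoid.ker q) x = Quotient.mk (Setoid.ker q) i} = (g • B).ncard := by
        rw [← Nat.card_eq_fintype_card, ← Nat.card_coe_set_eq]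
        apply Nat.card_congr
        apply Equiv.subtypeEquivRight
        intro x
        rw [Quotient.eq, Setoid.ker_def]
        exact hq i x g hg
      rw [h1, Set.ncard_smul_set]
      omega
    · intro x hx i j
      rw [Quotient.eq, Quotient.eq, Setoid.ker_def, Setoid.ker_def]
      obtain ⟨g, hg⟩ := hcov j
      rw [hq j i g hg, hq (x j) (x i) ((⟨x, hx⟩ : G) * g)]
      · rw [mul_smul]
        exact (Set.smul_mem_smul_set_iff (a := (⟨x, hx⟩ : G)) (x := i)).symm
      · rw [mul_smul]
        exact (Set.smul_mem_smul_set_iff (a := (⟨x, hx⟩ : G)) (x := j)).mpr hg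
  · left
    obtain ⟨a⟩ := ‹Nonempty α›
    have : ∃ b c : α, c ∉ orbit G b := by
      by_contra! hcon
      exact ht ⟨fun b c => hcon b c⟩
    obtain ⟨b, c, hbc⟩ := this
    let S : Finset α := Finset.univ.filter (fun i => i ∈ orbit G b)
    refine ⟨S.card, Finset.mem_Ico.mpr ⟨?_, ?_⟩, S, rfl, ?_⟩
    · exact Finset.card_pos.mpr ⟨b, by simp [S]⟩
    · apply Finset.card_lt_univ_of_notMem (x := c)
      simpa [S] using hbc
    · intro x hx i
      simp only [S, Finset.mem_filter, Finset.mem_univ, true_and]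
      constructor
      · rintro ⟨g, rfl⟩
        exact ⟨(⟨x, hx⟩ : G) * g, rfl⟩
      · rintro ⟨g, hg⟩
        refine ⟨(⟨x, hx⟩ : G)⁻¹ * g, ?_⟩
        simp only [mul_smul] at hg ⊢
        rw [hg]
        change x⁻¹ (x i) = i
        simp

/-- Sum of reciprocals of the nontrivial binomial coefficients. -/
noncomputable def recipChoose (N : ℕ) : ℝ := ∑ i ∈ Finset.Ico 1 N, (1 / (N.choose i) : ℝ)

theorem le_choose_one (N i : ℕ) (h1 : 1 ≤ i) (h2 : i + 1 ≤ N) : N ≤ N.choose i := by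
  induction N generalizing i with
  | zero => omega
  | succ N ih =>
    obtain ⟨j, rfl⟩ : ∃ j, i = j + 1 := ⟨i - 1, by omega⟩
    rw [Nat.choose_succ_succ]
    rcases Nat.lt_or_ge (j + 1) N with h | h
    · have := ih (j + 1) (by omega) (by omega)
      have h3 : 0 < N.choose j := Nat.choose_pos (by omega)
      simp only [Nat.succ_eq_add_one]
      omega
    · have : N = j + 1 := by omega
      subst this
      simp

theorem le_choose_two (N i : ℕ) (h1 : 2 ≤ i) (h2 : i + 2 ≤ N) : N.choose 2 ≤ N.choose i := by
  induction N generalizing i with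
  | zero => omega
  | succ N ih =>
    rcases Nat.lt_or_ge (i + 1) N with h | h
    · obtain ⟨j, rfl⟩ : ∃ j, i = j + 1 := ⟨i - 1, by omega⟩
      rw [Nat.choose_succ_succ N 1, Nat.choose_succ_succ N j]
      have := ih (j + 1) (by omega) (by omega)
      have h3 := le_choose_one N j (by omega) (by omega)
      simp only [Nat.choose_one_right]
      simp only [Nat.succ_eq_add_one, Nat.reduceAdd]
      omega
    · have : N + 1 = i + 2 := by omega
      rw [this, Nat.choose_symm_add]

theorem recipChoose_le (N : ℕ) (hN : 4 ≤ N) : recipChoose N ≤ 2 / N + 2 / (N - 1) := by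
  have hN' : (4 : ℝ) ≤ N := by exact_mod_cast hN
  unfold recipChoose
  have hch : ((N.choose 2 : ℕ) : ℝ) = N * (N - 1) / 2 := by
    rw [Nat.cast_choose_two]
  have hb : ∀ i ∈ Finset.Ico 1 N, (1 / (N.choose i) : ℝ) ≤
      (if i = 1 then (1 / N : ℝ) else 0) + (if i = N - 1 then (1 / N : ℝ) else 0)
        + 2 / (N * (N - 1)) := by
    intro i hi
    rw [Finset.mem_Ico] at hi
    have hpos : (0 : ℝ) < 2 / (N * (N - 1)) := by
      apply div_pos two_pos
      apply mul_pos <;> linarith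
    have h1 : (1 / (N.choose i) : ℝ) ≤ 1 / N := by
      apply one_div_le_one_div_of_le (by linarith)
      exact_mod_cast le_choose_one N i hi.1 (by omega)
    have hN0 : (0 : ℝ) ≤ 1 / N := by positivity
    by_cases hi1 : i = 1
    · rw [if_pos hi1]
      split_ifs <;> linarith
    · by_cases hi2 : i = N - 1
      · rw [if_pos hi2]
        split_ifs <;> linarith
      · rw [if_neg hi1, if_neg hi2, zero_add, zero_add]
        have h2 : (N.choose 2 : ℝ) ≤ N.choose i := by
          exact_mod_cast le_choose_two N i (by omega) (by omega)
        rw [hch] at h2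
        have h3 : (0 : ℝ) < N * (N - 1) / 2 := by
          apply div_pos _ two_pos
          apply mul_pos <;> linarith
        calc (1 / (N.choose i) : ℝ) ≤ 1 / (N * (N - 1) / 2) := one_div_le_one_div_of_le h3 h2
          _ = _ := by rw [one_div_div]
  refine (Finset.sum_le_sum hb).trans ?_
  rw [Finset.sum_add_distrib, Finset.sum_add_distrib, Finset.sum_ite_eq', Finset.sum_ite_eq',
    if_pos (Finset.mem_Ico.mpr ⟨by omega, by omega⟩),
    if_pos (Finset.mem_Ico.mpr ⟨by omega, by omega⟩), Finset.sum_const, Nat.card_Ico, nsmul_eq_mul,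
    Nat.cast_sub (by omega), Nat.cast_one]
  have h5 : (0 : ℝ) < N - 1 := by linarith
  have h6 : (0 : ℝ) < N := by linarith
  have h7 : ((N : ℝ) - 1) * (2 / (N * (N - 1))) = 2 / N := by field_simp
  rw [h7]
  have h8 : (2 : ℝ) / N ≤ 2 / (N - 1) := by
    apply div_le_div_of_nonneg_left <;> linarith
  have h9 : (1 : ℝ) / N + 1 / N = 2 / N := by ring
  linarith

theorem recipChoose_tendsto : Filter.Tendsto recipChoose Filter.atTop (nhds 0) := by
  have h1 : Filter.Tendsto (fun N : ℕ => (2 : ℝ) / N) Filter.atTop (nhds 0) :=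
    tendsto_const_div_atTop_nhds_zero_nat 2
  have h2 : Filter.Tendsto (fun N : ℕ => (2 : ℝ) / ((N - 1 : ℕ) : ℝ)) Filter.atTop (nhds 0) :=
    h1.comp (Filter.tendsto_sub_atTop_nat 1)
  have h3 := h1.add h2
  rw [add_zero] at h3
  refine squeeze_zero' (Filter.Eventually.of_forall fun N => ?_) ?_ h3
  · unfold recipChoose; positivity
  · filter_upwards [Filter.eventually_ge_atTop 4] with N hN
    have := recipChoose_le N hN
    rwa [Nat.cast_sub (by omega), Nat.cast_one]

theorem nonprim_pairs (n : ℕ) (hn : 2 ≤ n) :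
    ({p : Perm (Fin n) × Perm (Fin n) |
      ¬ IsPreprimitive (Subgroup.closure {p.1, p.2}) (Fin n)}.ncard : ℝ)
      ≤ (n.factorial : ℝ) ^ 2 * (recipChoose n + recipChoose (n - 1)) := by
  classical
  have : Nonempty (Fin n) := ⟨⟨0, by omega⟩⟩
  let A : ℕ → Set (Perm (Fin n) × Perm (Fin n)) := fun i =>
    {p | ∃ S : Finset (Fin n), S.card = i ∧ p.1 ∈ setStab S ∧ p.2 ∈ setStab S}
  let B : ℕ → Set (Perm (Fin n) × Perm (Fin n)) := fun d =>
    {p | ∃ r : Setoid (Fin n),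
      (∀ c : Quotient r, Fintype.card {x // Quotient.mk r x = c} = d + 1) ∧
        p.1 ∈ kerStab (Quotient.mk r) ∧ p.2 ∈ kerStab (Quotient.mk r)}
  have hsub : {p : Perm (Fin n) × Perm (Fin n) |
      ¬ IsPreprimitive (Subgroup.closure {p.1, p.2}) (Fin n)} ⊆
      (⋃ i ∈ Finset.Ico 1 n, A i) ∪ (⋃ d ∈ Finset.Ico 1 (n - 1), B d) := by
    intro p hp
    have h1 : p.1 ∈ Subgroup.closure {p.1, p.2} := Subgroup.subset_closure (by simp)
    have h2 : p.2 ∈ Subgroup.closure {p.1, p.2} := Subgroup.subset_closure (by simp)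
    rcases not_preprimitive _ hp with ⟨i, hi, S, hS, hG⟩ | ⟨d, hd, r, hr, hG⟩
    · left
      rw [Fintype.card_fin] at hi
      exact Set.mem_biUnion hi ⟨S, hS, hG h1, hG h2⟩
    · right
      rw [Fintype.card_fin] at hd
      refine Set.mem_biUnion hd ⟨r, ?_, hG h1, hG h2⟩
      intro c
      convert hr c
  have h1 : ((⋃ i ∈ Finset.Ico 1 n, A i).ncard : ℝ) ≤ (n.factorial : ℝ) ^ 2 * recipChoose n := by
    calc ((⋃ i ∈ Finset.Ico 1 n, A i).ncard : ℝ) ≤ ∑ i ∈ Finset.Ico 1 n, ((A i).ncard : ℝ) := by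
          exact_mod_cast Finset.set_ncard_biUnion_le _ _
      _ ≤ ∑ i ∈ Finset.Ico 1 n, (n.factorial : ℝ) ^ 2 * (1 / (n.choose i) : ℝ) := by
          apply Finset.sum_le_sum
          intro i hi
          have := setStab_pairs (α := Fin n) i (by simp at hi ⊢; omega)
          rw [Fintype.card_fin] at this
          exact this
      _ = _ := by rw [recipChoose, Finset.mul_sum]
  have h2 : ((⋃ i ∈ Finset.Ico 1 (n - 1), B i).ncard : ℝ) ≤ (n.factorial : ℝ) ^ 2 * recipChoose (n - 1) := by
    calc ((⋃ i ∈ Finset.Ico 1 (n - 1), B i).ncard : ℝ) ≤ ∑ i ∈ Finset.Ico 1 (n - 1), ((B i).ncard : ℝ) := by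
          exact_mod_cast Finset.set_ncard_biUnion_le _ _
      _ ≤ ∑ i ∈ Finset.Ico 1 (n - 1), (n.factorial : ℝ) ^ 2 * (1 / ((n - 1).choose i) : ℝ) := by
          apply Finset.sum_le_sum
          intro i hi
          have := kerStab_pairs (α := Fin n) i (by simp at hi ⊢; omega)
          rw [Fintype.card_fin] at this
          convert this
      _ = _ := by rw [recipChoose, Finset.mul_sum]
  have h3 := (Set.ncard_le_ncard hsub (Set.toFinite _)).trans (Set.ncard_union_le _ _)
  have h4 : ({p : Perm (Fin n) × Perm (Fin n) |
      ¬ IsPreprimitive (Subgroup.closure {p.1, p.2}) (Fin n)}.ncard : ℝ) ≤ 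
      ((⋃ i ∈ Finset.Ico 1 n, A i).ncard : ℝ) + ((⋃ i ∈ Finset.Ico 1 (n - 1), B i).ncard : ℝ) := by
    exact_mod_cast h3
  linarith

section cycles
set_option linter.unusedSectionVars false
open Function Finset

variable {α : Type*} [Fintype α] [DecidableEq α]

theorem exists_perm_extend {β : Type*} (f g : β ↪ α) : ∃ x : Perm α, ∀ t, x (f t) = g t := by
  classical
  let e : {y // y ∈ Set.range f} ≃ {y // y ∈ Set.range g} :=
    (Equiv.ofInjective f f.injective).symm.trans (Equiv.ofInjective g g.injective)
  refine ⟨e.extendSubtype, fun t => ?_⟩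
  rw [e.extendSubtype_apply_of_mem (f t) ⟨t, rfl⟩]
  change ((Equiv.ofInjective g g.injective) ((Equiv.ofInjective f f.injective).symm
    (Equiv.ofInjective f f.injective t)) : α) = g t
  rw [Equiv.symm_apply_apply]
  rfl

theorem count_agree {β : Type*} [Fintype β] [DecidableEq β] (f g : β ↪ α) :
    (univ.filter (fun x : Perm α => ∀ t, x (f t) = g t)).card * Fintype.card (β ↪ α)
      = (Fintype.card α).factorial := by
  -- the fibres of x ↦ x ∘ f all have the same size
  have hsame : ∀ h : β ↪ α, (univ.filter (fun x : Perm α => ∀ t, x (f t) = h t)).card =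
      (univ.filter (fun x : Perm α => ∀ t, x (f t) = g t)).card := by
    intro h
    obtain ⟨s, hs⟩ := exists_perm_extend h g
    apply Finset.card_bij (fun x _ => s * x)
    · intro x hx
      simp only [mem_filter, mem_univ, true_and] at hx ⊢
      intro t; rw [Perm.mul_apply, hx, hs]
    · intro x _ y _ hxy; exact mul_left_cancel hxy
    · intro y hy
      simp only [mem_filter, mem_univ, true_and] at hy ⊢
      refine ⟨s⁻¹ * y, ?_, by simp⟩
      intro t; rw [Perm.mul_apply, hy, ← hs]; simp
  have h1 : (univ : Finset (Perm α)).card = ∑ h : β ↪ α, (univ.filter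
      (fun x : Perm α => f.trans x.toEmbedding = h)).card :=
    Finset.card_eq_sum_card_fiberwise (fun x _ => mem_univ _)
  rw [Finset.card_univ, Fintype.card_perm] at h1
  rw [h1]
  have h2 : ∀ h : β ↪ α, (univ.filter (fun x : Perm α => f.trans x.toEmbedding = h)).card =
      (univ.filter (fun x : Perm α => ∀ t, x (f t) = g t)).card := by
    intro h
    rw [← hsame h]
    congr 1
    ext x
    simp [DFunLike.ext_iff]
  rw [Finset.sum_congr rfl (fun h _ => h2 h)]
  simp [mul_comm]

theorem sum_equivariant {β : Type*} [Fintype β] [DecidableEq β] (σ : Perm β) :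
    (∑ x : Perm α, (univ.filter (fun f : β ↪ α => ∀ t, x (f t) = f (σ t))).card)
      = if Fintype.card β ≤ Fintype.card α then (Fintype.card α).factorial else 0 := by
  have hsw : (∑ x : Perm α, (univ.filter (fun f : β ↪ α => ∀ t, x (f t) = f (σ t))).card)
      = ∑ f : β ↪ α, (univ.filter (fun x : Perm α => ∀ t, x (f t) = f (σ t))).card := by
    exact Finset.sum_card_bipartiteAbove_eq_sum_card_bipartiteBelow _
  rw [hsw]
  split_ifs with h
  · obtain ⟨f₀⟩ := Function.Embedding.nonempty_of_card_le h
    have hpos : 0 < Fintype.card (β ↪ α) := Fintype.card_pos_iff.mpr ⟨f₀⟩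
    apply Nat.eq_of_mul_eq_mul_right hpos
    rw [Finset.sum_mul]
    have h1 : ∀ f : β ↪ α, (univ.filter (fun x : Perm α => ∀ t, x (f t) = f (σ t))).card
        * Fintype.card (β ↪ α) = (Fintype.card α).factorial := fun f =>
      count_agree f (σ.toEmbedding.trans f)
    rw [Finset.sum_congr rfl (fun f _ => h1 f)]
    simp [mul_comm]
  · have : IsEmpty (β ↪ α) := ⟨fun f => h (Fintype.card_le_of_embedding f)⟩
    simp

/-- points with period `a` -/
noncomputable def perPts (x : Perm α) (a : ℕ) : Finset α := univ.filter (fun i => minimalPeriod x i = a)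

/-- pairs of points in different cycles with periods `a`, `b` -/
noncomputable def perPairs (x : Perm α) (a b : ℕ) : Finset (α × α) :=
  univ.filter (fun q => minimalPeriod x q.1 = a ∧ minimalPeriod x q.2 = b ∧ ¬ x.SameCycle q.1 q.2)

theorem emb_nat {a : ℕ} (x : Perm α) (f : ZMod a → α) (hf : ∀ t, x (f t) = f (t + 1)) (t : ℕ) :
    f t = x^[t] (f 0) := by
  induction t with
  | zero => simp
  | succ t ih => rw [Nat.cast_succ, ← hf, ih, Function.iterate_succ_apply']

theorem orbit_fun_succ {a : ℕ} [NeZero a] (x : Perm α) (i : α) (hi : minimalPeriod x i = a)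
    (z : ZMod a) : x (x^[z.val] i) = x^[(z + 1).val] i := by
  have : z + 1 = ((z.val + 1 : ℕ) : ZMod a) := by simp
  have h := iterate_mod_minimalPeriod_eq (f := x) (x := i) (n := z.val + 1)
  rw [hi] at h
  rw [this, ZMod.val_natCast, h, iterate_succ_apply']

theorem orbit_fun_inj {a : ℕ} [NeZero a] (x : Perm α) (i : α) (hi : minimalPeriod x i = a)
    (z w : ZMod a) (h : x^[z.val] i = x^[w.val] i) : z = w := by
  apply ZMod.val_injective
  apply iterate_injOn_Iio_minimalPeriod (f := x) (x := i) _ _ h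
  · rw [Set.mem_Iio, hi]; exact ZMod.val_lt z
  · rw [Set.mem_Iio, hi]; exact ZMod.val_lt w

theorem perPts_card (x : Perm α) (a : ℕ) [NeZero a] :
    (perPts x a).card =
      (univ.filter (fun f : ZMod a ↪ α => ∀ t, x (f t) = f (Equiv.addRight 1 t))).card := by
  symm
  apply Finset.card_bij (fun f _ => f 0)
  · intro f hf
    replace hf : ∀ t, x (f t) = f (t + 1) := (mem_filter.mp hf).2
    simp only [mem_filter, mem_univ, true_and, perPts]
    have hiff : ∀ t : ℕ, x^[t] (f 0) = f 0 ↔ a ∣ t := by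
      intro t
      rw [← emb_nat x f hf, f.injective.eq_iff, ZMod.natCast_eq_zero_iff]
    apply Nat.dvd_antisymm
    · apply IsPeriodicPt.minimalPeriod_dvd
      exact (hiff a).2 dvd_rfl
    · rw [← hiff]; exact iterate_minimalPeriod
  · intro f hf g hg h
    replace hf : ∀ t, x (f t) = f (t + 1) := (mem_filter.mp hf).2
    replace hg : ∀ t, x (g t) = g (t + 1) := (mem_filter.mp hg).2
    ext z
    have h1 := emb_nat x f hf z.val
    have h2 := emb_nat x g hg z.val
    simp only [ZMod.natCast_val, ZMod.cast_id', id_eq] at h1 h2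
    rw [h1, h2, h]
  · intro i hi
    simp only [mem_filter, mem_univ, true_and, perPts] at hi
    refine ⟨⟨fun z => x^[z.val] i, fun z w h => orbit_fun_inj x i hi z w h⟩, ?_, ?_⟩
    · exact mem_filter.mpr ⟨mem_univ _, fun t => orbit_fun_succ x i hi t⟩
    · change x^[(0 : ZMod a).val] i = i
      simp

theorem perPairs_card (x : Perm α) (a b : ℕ) [NeZero a] [NeZero b] :
    (perPairs x a b).card ≤
      (univ.filter (fun f : (ZMod a ⊕ ZMod b) ↪ α => ∀ t, x (f t) =
        f (Equiv.sumCongr (Equiv.addRight 1) (Equiv.addRight 1) t))).card := by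
  have key : ∀ q ∈ perPairs x a b, ∃ f : (ZMod a ⊕ ZMod b) ↪ α, (∀ t, x (f t) =
        f (Equiv.sumCongr (Equiv.addRight 1) (Equiv.addRight 1) t)) ∧
        f (Sum.inl 0) = q.1 ∧ f (Sum.inr 0) = q.2 := by
    rintro ⟨i, j⟩ hq
    simp only [perPairs, mem_filter, mem_univ, true_and] at hq
    obtain ⟨hi, hj, hij⟩ := hq
    have hne : ∀ s t : ℕ, x^[s] i ≠ x^[t] j := by
      intro s t h
      apply hij
      have h1 : x.SameCycle i (x^[s] i) := by
        rw [Perm.iterate_eq_pow]; exact ⟨s, by simp⟩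
      have h2 : x.SameCycle j (x^[t] j) := by
        rw [Perm.iterate_eq_pow]; exact ⟨t, by simp⟩
      rw [h] at h1
      exact h1.trans h2.symm
    refine ⟨⟨Sum.elim (fun z => x^[z.val] i) (fun z => x^[z.val] j), ?_⟩, ?_, ?_, ?_⟩
    · rintro (z | z) (w | w) h
      · exact congrArg _ (orbit_fun_inj x i hi z w h)
      · exact absurd h (hne _ _)
      · exact absurd h.symm (hne _ _)
      · exact congrArg _ (orbit_fun_inj x j hj z w h)
    · rintro (z | z)
      · exact orbit_fun_succ x i hi z
      · exact orbit_fun_succ x j hj z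
    · change x^[(0 : ZMod a).val] i = i
      simp
    · change x^[(0 : ZMod b).val] j = j
      simp
  apply Finset.card_le_card_of_surjOn (fun f => (f (Sum.inl 0), f (Sum.inr 0)))
  intro q hq
  obtain ⟨f, hf1, hf2, hf3⟩ := key q hq
  exact ⟨f, mem_coe.mpr (mem_filter.mpr ⟨mem_univ _, hf1⟩), Prod.ext hf2 hf3⟩

theorem sum_perPts (a : ℕ) (ha : 0 < a) (han : a ≤ Fintype.card α) :
    ∑ x : Perm α, (perPts x a).card = (Fintype.card α).factorial := by
  have : NeZero a := ⟨ha.ne'⟩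
  rw [Finset.sum_congr rfl (fun x _ => perPts_card x a), sum_equivariant, ZMod.card, if_pos han]

theorem sum_perPairs (a b : ℕ) (ha : 0 < a) (hb : 0 < b) :
    ∑ x : Perm α, (perPairs x a b).card ≤ (Fintype.card α).factorial := by
  have : NeZero a := ⟨ha.ne'⟩
  have : NeZero b := ⟨hb.ne'⟩
  refine (Finset.sum_le_sum (fun x _ => perPairs_card x a b)).trans ?_
  rw [sum_equivariant]
  split_ifs <;> simp

theorem sameCycle_card (x : Perm α) (i : α) :
    (univ.filter (fun j => x.SameCycle i j)).card = minimalPeriod x i := by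
  have : univ.filter (fun j => x.SameCycle i j) = (range (minimalPeriod x i)).image (fun t => x^[t] i) := by
    ext j
    simp only [mem_filter, mem_univ, true_and, mem_image, mem_range]
    constructor
    · intro h
      obtain ⟨t, ht⟩ := h.exists_nat_pow_eq
      refine ⟨t % minimalPeriod x i, Nat.mod_lt _ (minimalPeriod_pos_of_mem_periodicPts ?_), ?_⟩
      · exact Function.Injective.mem_periodicPts x.injective i
      · rw [iterate_mod_minimalPeriod_eq, Perm.iterate_eq_pow, ht]
    · rintro ⟨t, -, rfl⟩
      rw [Perm.iterate_eq_pow]; exact ⟨t, by simp⟩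
  rw [this, Finset.card_image_of_injOn, card_range]
  intro s hs t ht h
  exact iterate_injOn_Iio_minimalPeriod (by simpa using hs) (by simpa using ht) h

theorem sameCycle_period (x : Perm α) {i j : α} (h : x.SameCycle i j) :
    minimalPeriod x i = minimalPeriod x j := by
  rw [← sameCycle_card, ← sameCycle_card]
  congr 1
  ext k
  simp only [mem_filter, mem_univ, true_and]
  exact ⟨fun h' => h.symm.trans h', fun h' => h.trans h'⟩

end cycles

section moments
open Function Finset

variable {α : Type*} [Fintype α] [DecidableEq α]

theorem pts_mul (x : Perm α) (p q : ℕ) :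
    (perPts x p).card * (perPts x q).card ≤
      (perPairs x p q).card + if p = q then p * (perPts x p).card else 0 := by
  have hsub : perPts x p ×ˢ perPts x q ⊆ perPairs x p q ∪
      (perPts x p ×ˢ perPts x q).filter (fun r => x.SameCycle r.1 r.2) := by
    rintro ⟨i, j⟩ h
    have h' := h
    simp only [mem_product, perPts, mem_filter, mem_univ, true_and] at h
    by_cases hs : x.SameCycle i j
    · exact mem_union_right _ (mem_filter.mpr ⟨h', hs⟩)
    · exact mem_union_left _ (mem_filter.mpr ⟨mem_univ _, h.1, h.2, hs⟩)
  rw [← card_product]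
  refine (card_le_card hsub).trans ((card_union_le _ _).trans (Nat.add_le_add_left ?_ _))
  split_ifs with hpq
  · have : (perPts x p ×ˢ perPts x q).filter (fun r => x.SameCycle r.1 r.2) ⊆
        (perPts x p).biUnion (fun i => (univ.filter (fun j => x.SameCycle i j)).image (fun j => (i, j))) := by
      rintro ⟨i, j⟩ h
      simp only [mem_filter, mem_product] at h
      simp only [mem_biUnion]
      exact ⟨i, h.1.1, mem_image.mpr ⟨j, mem_filter.mpr ⟨mem_univ _, h.2⟩, rfl⟩⟩
    refine (card_le_card this).trans ?_
    rw [mul_comm]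
    apply card_biUnion_le_card_mul
    intro i hi
    refine card_image_le.trans ?_
    rw [sameCycle_card]
    exact (mem_filter.mp hi).2.le
  · rw [Nat.le_zero, card_eq_zero, filter_eq_empty_iff]
    rintro ⟨i, j⟩ h hs
    simp only [mem_product, perPts, mem_filter, mem_univ, true_and] at h
    exact hpq (h.1.symm.trans ((sameCycle_period x hs).trans h.2))

theorem noCycle_card (P : Finset ℕ) (hP : ∀ p ∈ P, 0 < p ∧ p ≤ Fintype.card α)
    (hS : 0 < ∑ p ∈ P, (1 / p : ℝ)) :
    ((univ.filter (fun x : Perm α => ∀ p ∈ P, perPts x p = ∅)).card : ℝ) ≤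
      (Fintype.card α).factorial / ∑ p ∈ P, (1 / p : ℝ) := by
  set S := ∑ p ∈ P, (1 / p : ℝ) with hSdef
  set F : ℝ := ((Fintype.card α).factorial : ℝ) with hF
  let X : Perm α → ℝ := fun x => ∑ p ∈ P, ((perPts x p).card : ℝ) * (1 / p)
  have hX1 : ∑ x, X x = F * S := by
    simp only [X]
    rw [sum_comm, hSdef, mul_sum]
    apply sum_congr rfl
    intro p hp
    rw [← sum_mul]
    congr 1
    rw [hF, ← sum_perPts p (hP p hp).1 (hP p hp).2]
    push_cast
    rfl
  have hXsq : ∀ x, X x ^ 2 ≤ (∑ p ∈ P, ∑ q ∈ P, ((perPairs x p q).card : ℝ) * (1 / p * (1 / q))) + X x := by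
    intro x
    simp only [X]
    rw [sq, sum_mul_sum, ← sum_add_distrib]
    apply sum_le_sum
    intro p hp
    have hp0 : (0 : ℝ) < p := by exact_mod_cast (hP p hp).1
    have h1 : ∀ q ∈ P, ((perPts x p).card : ℝ) * (1 / p) * ((perPts x q).card * (1 / q)) ≤
        ((perPairs x p q).card : ℝ) * (1 / p * (1 / q)) +
          if p = q then ((perPts x p).card : ℝ) * (1 / p) else 0 := by
      intro q hq
      have hq0 : (0 : ℝ) < q := by exact_mod_cast (hP q hq).1
      have h2 : ((perPts x p).card : ℝ) * (perPts x q).card ≤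
        (perPairs x p q).card + if p = q then (p : ℝ) * (perPts x p).card else 0 := by
        exact_mod_cast pts_mul x p q
      have h3 := mul_le_mul_of_nonneg_right h2 (show (0 : ℝ) ≤ 1 / p * (1 / q) by positivity)
      calc _ = ((perPts x p).card : ℝ) * (perPts x q).card * (1 / p * (1 / q)) := by ring
        _ ≤ _ := h3
        _ = _ := by
          rw [add_mul]
          congr 1
          split_ifs with h
          · subst h; field_simp
          · simp
    refine (sum_le_sum h1).trans ?_
    rw [sum_add_distrib, sum_ite_eq, if_pos hp]
  have hX2 : ∑ x, X x ^ 2 ≤ F * S ^ 2 + F * S := by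
    refine (sum_le_sum (fun x _ => hXsq x)).trans ?_
    rw [sum_add_distrib, hX1]
    refine add_le_add ?_ le_rfl
    rw [sum_comm]
    rw [sq, hSdef, sum_mul_sum, mul_sum]
    apply sum_le_sum
    intro p hp
    rw [sum_comm, mul_sum]
    apply sum_le_sum
    intro q hq
    rw [← sum_mul]
    apply mul_le_mul_of_nonneg_right _ (by positivity)
    rw [hF]
    exact_mod_cast sum_perPairs p q (hP p hp).1 (hP q hq).1
  have hvar : ∑ x, (X x - S) ^ 2 ≤ F * S := by
    have : ∑ x, (X x - S) ^ 2 = ∑ x, X x ^ 2 - 2 * S * ∑ x, X x + F * S ^ 2 := by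
      have h1 : ∀ x, (X x - S) ^ 2 = X x ^ 2 - 2 * S * X x + S ^ 2 := fun x => by ring
      rw [sum_congr rfl (fun x _ => h1 x), sum_add_distrib, sum_sub_distrib, ← mul_sum,
        sum_const, card_univ, Fintype.card_perm, nsmul_eq_mul]
    rw [this, hX1]
    nlinarith
  have hlow : ((univ.filter (fun x : Perm α => ∀ p ∈ P, perPts x p = ∅)).card : ℝ) * S ^ 2
      ≤ ∑ x, (X x - S) ^ 2 := by
    rw [← nsmul_eq_mul, ← sum_const]
    refine (sum_le_sum ?_).trans (sum_le_sum_of_subset_of_nonneg (filter_subset _ _) (fun _ _ _ => sq_nonneg _))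
    intro x hx
    have hx := (mem_filter.mp hx).2
    have : X x = 0 := by
      apply sum_eq_zero
      intro p hp
      rw [hx p hp]; simp
    rw [this]; simp
  rw [le_div_iff₀ hS]
  have h := hlow.trans hvar
  apply le_of_mul_le_mul_right _ hS
  linarith

/-- Permutations with a `p`-cycle (`p ∈ P`) and another cycle of length divisible by `p`. -/
noncomputable def badPerms (α : Type*) [Fintype α] [DecidableEq α] (P : Finset ℕ) : Finset (Perm α) :=
  univ.filter (fun x => ∃ p ∈ P, ∃ i j, minimalPeriod x i = p ∧ p ∣ minimalPeriod x j ∧ ¬ x.SameCycle i j)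

theorem perPairs_ge (x : Perm α) (i j : α) (h : ¬ x.SameCycle i j) :
    minimalPeriod x i * minimalPeriod x j ≤
      (perPairs x (minimalPeriod x i) (minimalPeriod x j)).card := by
  rw [← sameCycle_card x i, ← sameCycle_card x j, ← card_product, sameCycle_card, sameCycle_card]
  apply card_le_card
  rintro ⟨k, l⟩ hkl
  simp only [mem_product, mem_filter, mem_univ, true_and] at hkl
  refine mem_filter.mpr ⟨mem_univ _, (sameCycle_period x hkl.1).symm,
    (sameCycle_period x hkl.2).symm, fun h' => h ?_⟩
  exact hkl.1.trans (h'.trans hkl.2.symm)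

theorem period_pos (x : Perm α) (i : α) : 0 < minimalPeriod x i :=
  minimalPeriod_pos_of_mem_periodicPts (Function.Injective.mem_periodicPts x.injective i)

theorem badPerms_card (P : Finset ℕ) (hP : ∀ p ∈ P, 0 < p) :
    ((badPerms α P).card : ℝ) ≤ (Fintype.card α).factorial *
      ((∑ p ∈ P, ((p : ℝ) ^ 2)⁻¹) * ∑ k ∈ Icc 1 (Fintype.card α), (k : ℝ)⁻¹) := by
  set n := Fintype.card α with hn
  let Y : Perm α → ℝ := fun x => ∑ p ∈ P, ∑ k ∈ Icc 1 n,
    ((perPairs x p (k * p)).card : ℝ) * (((p : ℝ) ^ 2)⁻¹ * (k : ℝ)⁻¹)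
  have hY0 : ∀ x, 0 ≤ Y x := fun x => by
    apply sum_nonneg; intro p _; apply sum_nonneg; intro k _; positivity
  have hY1 : ∀ x ∈ badPerms α P, 1 ≤ Y x := by
    intro x hx
    obtain ⟨p, hp, i, j, hi, hj, hij⟩ := (mem_filter.mp hx).2
    obtain ⟨k, hk⟩ := hj
    have hjpos := period_pos x j
    have hk0 : 0 < k := by
      rcases Nat.eq_zero_or_pos k with h | h
      · subst h; omega
      · exact h
    have hjn : minimalPeriod x j ≤ n := by
      rw [← sameCycle_card]; exact card_le_univ _
    have hp0 := hP p hp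
    have hkn : k ≤ n := le_trans (by rw [hk]; exact Nat.le_mul_of_pos_left _ hp0) hjn
    have hge := perPairs_ge x i j hij
    rw [hi, hk, mul_comm p k] at hge
    have hterm : (1 : ℝ) ≤ ((perPairs x p (k * p)).card : ℝ) * (((p : ℝ) ^ 2)⁻¹ * (k : ℝ)⁻¹) := by
      have h1 : ((p : ℝ) * (k * p)) ≤ ((perPairs x p (k * p)).card : ℝ) := by exact_mod_cast hge
      have hp' : (0 : ℝ) < p := by exact_mod_cast hp0
      have hk' : (0 : ℝ) < k := by exact_mod_cast hk0
      calc (1 : ℝ) = ((p : ℝ) * (k * p)) * (((p : ℝ) ^ 2)⁻¹ * (k : ℝ)⁻¹) := by field_simp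
        _ ≤ _ := mul_le_mul_of_nonneg_right h1 (by positivity)
    refine hterm.trans ?_
    refine le_trans ?_ (single_le_sum (f := fun p => ∑ k ∈ Icc 1 n,
      ((perPairs x p (k * p)).card : ℝ) * (((p : ℝ) ^ 2)⁻¹ * (k : ℝ)⁻¹)) (fun q _ => ?_) hp)
    · exact single_le_sum (f := fun k =>
        ((perPairs x p (k * p)).card : ℝ) * (((p : ℝ) ^ 2)⁻¹ * (k : ℝ)⁻¹))
        (fun q _ => by positivity) (mem_Icc.mpr ⟨hk0, hkn⟩)
    · apply sum_nonneg; intro k _; positivity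
  have h1 : ((badPerms α P).card : ℝ) ≤ ∑ x, Y x := by
    calc ((badPerms α P).card : ℝ) = ∑ x ∈ badPerms α P, (1 : ℝ) := by simp
      _ ≤ ∑ x ∈ badPerms α P, Y x := sum_le_sum hY1
      _ ≤ _ := sum_le_sum_of_subset_of_nonneg (subset_univ _) (fun x _ _ => hY0 x)
  refine h1.trans ?_
  simp only [Y]
  rw [sum_comm, sum_mul_sum, mul_sum]
  apply sum_le_sum
  intro p hp
  rw [sum_comm, mul_sum]
  apply sum_le_sum
  intro k hk
  rw [← sum_mul]
  apply mul_le_mul_of_nonneg_right _ (by positivity)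
  exact_mod_cast sum_perPairs p (k * p) (hP p hp) (Nat.mul_pos (mem_Icc.mp hk).1 (hP p hp))

theorem good_cycle (P : Finset ℕ) (hP : ∀ p ∈ P, p.Prime) (x : Perm α)
    (h1 : ¬ ∀ p ∈ P, perPts x p = ∅) (h2 : x ∉ badPerms α P) :
    ∃ L : ℕ, ∃ p ∈ P, (x ^ L).IsCycle ∧ (x ^ L).support.card = p := by
  push Not at h1
  obtain ⟨p, hp, i, hi⟩ := h1
  have hi : minimalPeriod x i = p := (mem_filter.mp hi).2
  have hpp := hP p hp
  have h3 : ∀ j, ¬ x.SameCycle i j → ¬ p ∣ minimalPeriod x j := by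
    intro j hj hd
    exact h2 (mem_filter.mpr ⟨mem_univ _, p, hp, i, j, hi, hd, hj⟩)
  set L := ∏ j ∈ univ.filter (fun j => ¬ x.SameCycle i j), minimalPeriod x j with hL
  have hpL : ¬ p ∣ L := by
    rw [hL, Prime.dvd_finsetProd_iff hpp.prime]
    rintro ⟨j, hj, hd⟩
    exact h3 j (mem_filter.mp hj).2 hd
  have hfix : ∀ j m, (x ^ m) j = j ↔ minimalPeriod x j ∣ m := by
    intro j m
    rw [← isPeriodicPt_iff_minimalPeriod_dvd, ← Perm.iterate_eq_pow]
    rfl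
  have hout : ∀ j, ¬ x.SameCycle i j → (x ^ L) j = j := by
    intro j hj
    rw [hfix]
    exact dvd_prod_of_mem _ (mem_filter.mpr ⟨mem_univ _, hj⟩)
  have hord : orderOf (x ^ L) = p := by
    have : Fact p.Prime := ⟨hpp⟩
    apply orderOf_eq_prime
    · ext j
      rw [← pow_mul, Perm.one_apply]
      by_cases hj : x.SameCycle i j
      · rw [hfix, ← sameCycle_period x hj, hi]; exact dvd_mul_left _ _
      · rw [hfix]; exact ((hfix j L).mp (hout j hj)).mul_right _
    · intro h
      have : (x ^ L) i = i := by rw [h]; rfl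
      rw [hfix, hi] at this
      exact hpL this
  have hsupp : (x ^ L).support.card ≤ p := by
    rw [← hi, ← sameCycle_card]
    apply card_le_card
    intro j hj
    refine mem_filter.mpr ⟨mem_univ _, ?_⟩
    by_contra hn
    exact Perm.mem_support.mp hj (hout j hn)
  have hcyc : (x ^ L).IsCycle := by
    apply Perm.isCycle_of_prime_order
    · rw [hord]; exact hpp
    · rw [hord]; have := hpp.pos; omega
  exact ⟨L, p, hp, hcyc, by rw [← hcyc.orderOf, hord]⟩

end moments


section primes
open Finset Chebyshev Filter

noncomputable def primesIn (a b : ℕ) : Finset ℕ := (Ioc (16 ^ a) (16 ^ b)).filter Nat.Prime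

theorem theta_diff (a b : ℕ) (h : a ≤ b) :
    ∑ p ∈ primesIn a b, Real.log p = theta ((16 ^ b : ℕ) : ℝ) - theta ((16 ^ a : ℕ) : ℝ) := by
  unfold theta primesIn
  rw [Nat.floor_natCast, Nat.floor_natCast, eq_sub_iff_add_eq, sum_filter, sum_filter, sum_filter, add_comm]
  exact sum_Ioc_consecutive _ (Nat.zero_le _) (Nat.pow_le_pow_right (by norm_num) h)

theorem theta_block : ∃ j₀ : ℕ, ∀ j ≥ j₀,
    ((16 ^ (j + 1) : ℕ) : ℝ) * (Real.log 2 / 2) ≤ ∑ p ∈ primesIn j (j + 1), Real.log p := by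
  have hl2 : 0 < Real.log 2 := Real.log_pos (by norm_num)
  have h1 := (isLittleO_log_rpow_atTop (r := 1 / 2) (by norm_num)).bound
    (show (0 : ℝ) < 3 * Real.log 2 / 32 by positivity)
  have h2 : Tendsto (fun j : ℕ => ((16 ^ (j + 1) : ℕ) : ℝ)) atTop atTop := by
    apply tendsto_natCast_atTop_atTop.comp
    exact (tendsto_pow_atTop_atTop_of_one_lt (by norm_num)).comp (tendsto_add_atTop_nat 1)
  obtain ⟨j₀, hj₀⟩ := eventually_atTop.mp (h2.eventually h1)
  refine ⟨j₀, fun j hj => ?_⟩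
  have hb := hj₀ j hj
  rw [theta_diff j (j + 1) (by omega)]
  have hup := theta_le_log4_mul_x (x := ((16 ^ j : ℕ) : ℝ)) (by positivity)
  have hlo := theta_ge (16 ^ (j + 1))
  set N : ℝ := ((16 ^ (j + 1) : ℕ) : ℝ) with hN
  have hNj : ((16 ^ j : ℕ) : ℝ) = N / 16 := by rw [hN]; push_cast; ring
  have hN16 : (16 : ℝ) ≤ N := by
    rw [hN]; exact_mod_cast Nat.le_self_pow (by omega) 16
  rw [hNj] at hup
  rw [hNj]
  have hl4 : Real.log 4 = 2 * Real.log 2 := by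
    rw [show (4 : ℝ) = 2 ^ 2 by norm_num, Real.log_pow]; norm_num
  rw [hl4] at hup
  rw [← Real.sqrt_eq_rpow, Real.norm_of_nonneg (Real.log_nonneg (by linarith)),
    Real.norm_of_nonneg (Real.sqrt_nonneg _)] at hb
  have hs : 1 ≤ √N := by rw [Real.one_le_sqrt]; linarith
  have hss : √N * √N = N := Real.mul_self_sqrt (by linarith)
  have hlog0 : 0 ≤ Real.log N := Real.log_nonneg (by linarith)
  have hlog1 : Real.log (N + 1) ≤ 2 * Real.log N := by
    have : (2 : ℝ) * Real.log N = Real.log (N ^ 2) := by rw [Real.log_pow]; norm_num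
    rw [this]
    apply Real.log_le_log (by linarith)
    nlinarith
  have h3 : Real.log N ≤ √N * Real.log N := by nlinarith
  have h4 : √N * Real.log N ≤ 3 * Real.log 2 / 32 * N := by
    calc √N * Real.log N ≤ √N * (3 * Real.log 2 / 32 * √N) := by gcongr
      _ = 3 * Real.log 2 / 32 * (√N * √N) := by ring
      _ = _ := by rw [hss]
  nlinarith

theorem recip_block : ∃ j₀ : ℕ, ∀ j ≥ j₀,
    (1 / 8 : ℝ) * (1 / ((j : ℝ) + 1)) ≤ ∑ p ∈ primesIn j (j + 1), (1 / p : ℝ) := by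
  obtain ⟨j₀, h⟩ := theta_block
  refine ⟨j₀, fun j hj => ?_⟩
  have h1 := h j hj
  have hl2 : 0 < Real.log 2 := Real.log_pos (by norm_num)
  set N : ℝ := ((16 ^ (j + 1) : ℕ) : ℝ) with hN
  have hN16 : (16 : ℝ) ≤ N := by
    rw [hN]; exact_mod_cast Nat.le_self_pow (by omega) 16
  have hlogN : Real.log N = ((j : ℝ) + 1) * (4 * Real.log 2) := by
    rw [hN]; push_cast
    rw [Real.log_pow, show (16 : ℝ) = 2 ^ 4 by norm_num, Real.log_pow]; push_cast; ring
  have h2 : ∑ p ∈ primesIn j (j + 1), Real.log p ≤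
      (∑ p ∈ primesIn j (j + 1), (1 / p : ℝ)) * (N * Real.log N) := by
    rw [sum_mul]
    apply sum_le_sum
    intro p hp
    obtain ⟨hp1, hp2⟩ := mem_filter.mp hp
    have hp0 : (0 : ℝ) < p := by exact_mod_cast hp2.pos
    have hpN : (p : ℝ) ≤ N := by rw [hN]; exact_mod_cast (mem_Ioc.mp hp1).2
    have hlp : Real.log p ≤ Real.log N := Real.log_le_log hp0 hpN
    have hlp0 : 0 ≤ Real.log p := Real.log_nonneg (by exact_mod_cast hp2.one_lt.le)
    calc Real.log p = 1 / p * (p * Real.log p) := by field_simp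
      _ ≤ _ := by gcongr
  have h3 := h1.trans h2
  rw [hlogN] at h3
  have hj1 : (0 : ℝ) < (j : ℝ) + 1 := by positivity
  set T := ∑ p ∈ primesIn j (j + 1), (1 / p : ℝ)
  have h4 : 0 < N * Real.log 2 := by positivity
  have h5 : (1 / 8 : ℝ) ≤ T * ((j : ℝ) + 1) := by
    apply le_of_mul_le_mul_right _ h4
    nlinarith
  rw [mul_one_div, div_le_iff₀ hj1]
  exact h5

theorem recip_sum : ∃ j₀ : ℕ, ∀ a ≥ j₀, ∀ b ≥ a,
    (1 / 8 : ℝ) * (Real.log (b + 1) - Real.log (a + 1)) ≤ ∑ p ∈ primesIn a b, (1 / p : ℝ) := by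
  obtain ⟨j₀, h⟩ := recip_block
  refine ⟨j₀, fun a ha b hb => ?_⟩
  induction b, hb using Nat.le_induction with
  | base => simp [primesIn]
  | succ b hb ih =>
    have h1 := h b (by omega)
    have h2 : ∑ p ∈ primesIn a (b + 1), (1 / p : ℝ) =
        ∑ p ∈ primesIn a b, (1 / p : ℝ) + ∑ p ∈ primesIn b (b + 1), (1 / p : ℝ) := by
      unfold primesIn
      rw [sum_filter, sum_filter, sum_filter]
      exact (sum_Ioc_consecutive _ (Nat.pow_le_pow_right (by norm_num) hb)
        (Nat.pow_le_pow_right (by norm_num) (by omega))).symm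
    have hb1 : (0 : ℝ) < (b : ℝ) + 1 := by positivity
    have h3 : Real.log (((b + 1 : ℕ) : ℝ) + 1) - Real.log (b + 1) ≤ 1 / ((b : ℝ) + 1) := by
      rw [← Real.log_div (by positivity) (by positivity)]
      refine (Real.log_le_sub_one_of_pos (by positivity)).trans ?_
      push_cast
      apply le_of_eq
      field_simp
      ring
    rw [h2]
    linarith

theorem recip_sq (a b : ℕ) : ∑ p ∈ primesIn a b, ((p : ℝ) ^ 2)⁻¹ ≤ ((16 : ℝ) ^ a)⁻¹ := by
  rcases le_total b a with h | h
  · have : primesIn a b = ∅ := by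
      unfold primesIn
      rw [Ioc_eq_empty, filter_empty]
      exact not_lt.mpr (Nat.pow_le_pow_right (by norm_num) h)
    rw [this]; simp
  · have h1 := sum_Ioc_inv_sq_le_sub (α := ℝ) (k := 16 ^ a) (n := 16 ^ b) (by positivity)
      (Nat.pow_le_pow_right (by norm_num) h)
    calc _ ≤ ∑ p ∈ (Ioc (16 ^ a) (16 ^ b) : Finset ℕ), ((p : ℝ) ^ 2)⁻¹ :=
          sum_le_sum_of_subset_of_nonneg (filter_subset _ _) (fun _ _ _ => by positivity)
      _ ≤ _ := h1
      _ ≤ _ := by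
        push_cast
        have : (0 : ℝ) ≤ ((16 : ℝ) ^ b)⁻¹ := by positivity
        linarith

/-- upper cut-off exponent -/
def cutB (n : ℕ) : ℕ := Nat.log 16 n - 1
/-- lower cut-off exponent -/
def cutA (n : ℕ) : ℕ := Nat.sqrt (cutB n)

theorem cutB_tendsto : Tendsto cutB atTop atTop := by
  rw [tendsto_atTop]
  intro m
  filter_upwards [eventually_ge_atTop (16 ^ (m + 1))] with n hn
  have := Nat.le_log_of_pow_le (b := 16) (by norm_num) hn
  unfold cutB
  omega

theorem cutA_tendsto : Tendsto cutA atTop atTop := by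
  refine Tendsto.comp ?_ cutB_tendsto
  rw [tendsto_atTop]
  intro m
  filter_upwards [eventually_ge_atTop (m * m)] with b hb
  exact Nat.le_sqrt.mpr hb

theorem recip_tendsto :
    Tendsto (fun n => ∑ p ∈ primesIn (cutA n) (cutB n), (1 / p : ℝ)) atTop atTop := by
  obtain ⟨j₀, h⟩ := recip_sum
  have h1 : Tendsto (fun n => (1 / 8 : ℝ) * (1 / 2 * Real.log ((cutB n : ℝ) + 1) - Real.log 2)) atTop atTop := by
    apply Tendsto.const_mul_atTop (by norm_num)
    apply tendsto_atTop_add_const_right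
    apply Tendsto.const_mul_atTop (by norm_num)
    apply Real.tendsto_log_atTop.comp
    apply tendsto_atTop_add_const_right
    exact tendsto_natCast_atTop_atTop.comp cutB_tendsto
  refine tendsto_atTop_mono' _ ?_ h1
  filter_upwards [cutA_tendsto.eventually_ge_atTop j₀] with n hn
  refine le_trans ?_ (h (cutA n) hn (cutB n) (Nat.sqrt_le_self _))
  have h2 : cutA n * cutA n ≤ cutB n := Nat.sqrt_le _
  have h3 : ((cutA n : ℝ)) * cutA n ≤ cutB n := by exact_mod_cast h2
  have h4 : Real.log ((cutA n : ℝ) + 1) ≤ 1 / 2 * Real.log ((cutB n : ℝ) + 1) + Real.log 2 := by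
    have h5 : 2 * Real.log ((cutA n : ℝ) + 1) ≤ Real.log ((cutB n : ℝ) + 1) + 2 * Real.log 2 := by
      have e1 : 2 * Real.log ((cutA n : ℝ) + 1) = Real.log (((cutA n : ℝ) + 1) ^ 2) := by
        rw [Real.log_pow]; norm_num
      have e2 : 2 * Real.log 2 = Real.log 4 := by
        rw [show (4 : ℝ) = 2 ^ 2 by norm_num, Real.log_pow]; norm_num
      rw [e1, e2, ← Real.log_mul (by positivity) (by norm_num)]
      apply Real.log_le_log (by positivity)
      have : (0 : ℝ) ≤ cutA n := by positivity
      nlinarith [sq_nonneg ((cutA n : ℝ) - 1)]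
    linarith
  apply mul_le_mul_of_nonneg_left _ (by norm_num)
  linarith

theorem harm_le (n : ℕ) : ∑ k ∈ Icc 1 n, (k : ℝ)⁻¹ ≤ 1 + Real.log n := by
  have := harmonic_le_one_add_log n
  rw [harmonic_eq_sum_Icc] at this
  push_cast at this
  exact this

theorem bad_tendsto :
    Tendsto (fun n : ℕ => (∑ p ∈ primesIn (cutA n) (cutB n), ((p : ℝ) ^ 2)⁻¹) *
      ∑ k ∈ Icc 1 n, (k : ℝ)⁻¹) atTop (nhds 0) := by
  have h1 : Tendsto (fun m : ℕ => 20 * ((m : ℝ) ^ 2 * ((1 / 16 : ℝ)) ^ m)) atTop (nhds 0) := by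
    have := (tendsto_pow_const_mul_const_pow_of_abs_lt_one 2 (r := (1 / 16 : ℝ))
      (by rw [abs_of_pos] <;> norm_num)).const_mul 20
    simpa using this
  refine squeeze_zero' (Eventually.of_forall fun n => ?_) ?_ (h1.comp cutA_tendsto)
  · apply mul_nonneg <;> apply sum_nonneg <;> intro _ _ <;> positivity
  · filter_upwards [cutA_tendsto.eventually_ge_atTop 1, eventually_ge_atTop 16] with n hn hn16
    have hb : cutB n < (cutA n + 1) * (cutA n + 1) := Nat.lt_succ_sqrt _
    have hn2 : n < 16 ^ (cutB n + 2) := by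
      have h2 := Nat.lt_pow_succ_log_self (b := 16) (by norm_num) n
      refine h2.trans_le (Nat.pow_le_pow_right (by norm_num) ?_)
      unfold cutB; omega
    have hlog : Real.log n ≤ (cutB n + 2) * 3 := by
      have h3 : (n : ℝ) ≤ (16 : ℝ) ^ (cutB n + 2) := by exact_mod_cast hn2.le
      have h4 : Real.log n ≤ Real.log ((16 : ℝ) ^ (cutB n + 2)) :=
        Real.log_le_log (by exact_mod_cast (by omega : 0 < n)) h3
      rw [Real.log_pow] at h4
      have h5 : Real.log 16 ≤ 3 := by
        rw [show (16 : ℝ) = 2 ^ 4 by norm_num, Real.log_pow]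
        have := Real.log_two_lt_d9
        push_cast; linarith
      refine h4.trans ?_
      push_cast
      gcongr
    have hb' : (cutB n : ℝ) + 1 ≤ (cutA n + 1) * (cutA n + 1) := by exact_mod_cast hb
    have hA : (1 : ℝ) ≤ cutA n := by exact_mod_cast hn
    have hbound : ∑ k ∈ Icc 1 n, (k : ℝ)⁻¹ ≤ 20 * (cutA n : ℝ) ^ 2 := by
      refine (harm_le n).trans ?_
      nlinarith
    simp only [Function.comp]
    calc _ ≤ ((16 : ℝ) ^ (cutA n))⁻¹ * (20 * (cutA n : ℝ) ^ 2) := by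
          apply mul_le_mul (recip_sq _ _) hbound _ (by positivity)
          apply sum_nonneg; intro _ _; positivity
      _ = _ := by rw [one_div, inv_pow]; ring

end primes

section final
open Finset Filter

theorem good_of_not_bad (n : ℕ) (hn : 16 ≤ n) (p : Perm (Fin n) × Perm (Fin n))
    (hprim : IsPreprimitive (Subgroup.closure {p.1, p.2}) (Fin n))
    (h1 : ¬ ∀ q ∈ primesIn (cutA n) (cutB n), perPts p.1 q = ∅)
    (h2 : p.1 ∉ badPerms (Fin n) (primesIn (cutA n) (cutB n))) :
    Subgroup.closure {p.1, p.2} = ⊤ ∨ Subgroup.closure {p.1, p.2} = alternatingGroup (Fin n) := by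
  obtain ⟨L, q, hq, hcyc, hcard⟩ := good_cycle (primesIn (cutA n) (cutB n))
    (fun q hq => (mem_filter.mp hq).2) p.1 h1 h2
  apply closure_eq_of_le
  refine jordan_prime _ hprim (p.1 ^ L) hcyc
    (Subgroup.pow_mem _ (Subgroup.subset_closure (by simp)) L) ?_ ?_
  · rw [hcard]; exact (mem_filter.mp hq).2
  · rw [hcard, Fintype.card_fin]
    have h3 := (mem_Ioc.mp (mem_filter.mp hq).1).2
    have h4 : 16 ^ Nat.log 16 n ≤ n := Nat.pow_log_le_self 16 (by omega)
    have h5 : 1 ≤ Nat.log 16 n := Nat.le_log_of_pow_le (by norm_num) (by simpa using hn)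
    have h6 : Nat.log 16 n = cutB n + 1 := by unfold cutB; omega
    rw [h6, pow_succ] at h4
    omega

/-- the error term -/
noncomputable def errTerm (n : ℕ) : ℝ :=
  recipChoose n + recipChoose (n - 1) + 1 / (∑ p ∈ primesIn (cutA n) (cutB n), (1 / p : ℝ)) +
    (∑ p ∈ primesIn (cutA n) (cutB n), ((p : ℝ) ^ 2)⁻¹) * ∑ k ∈ Icc 1 n, (k : ℝ)⁻¹

theorem errTerm_tendsto : Tendsto errTerm atTop (nhds 0) := by
  have h1 := recipChoose_tendsto
  have h2 := recipChoose_tendsto.comp (tendsto_sub_atTop_nat 1)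
  have h3 : Tendsto (fun n => 1 / (∑ p ∈ primesIn (cutA n) (cutB n), (1 / p : ℝ))) atTop (nhds 0) :=
    (tendsto_const_nhds (x := (1 : ℝ))).div_atTop recip_tendsto
  have := ((h1.add h2).add h3).add bad_tendsto
  simp only [add_zero] at this
  exact this

theorem main_bound (n : ℕ) (hn : 16 ≤ n)
    (hS : 0 < ∑ p ∈ primesIn (cutA n) (cutB n), (1 / p : ℝ)) :
    (n.factorial : ℝ) ^ 2 ≤ ({p : Perm (Fin n) × Perm (Fin n) |
      Subgroup.closure {p.1, p.2} = ⊤ ∨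
      Subgroup.closure {p.1, p.2} = alternatingGroup (Fin n)}.ncard : ℝ) +
      (n.factorial : ℝ) ^ 2 * errTerm n := by
  set P := primesIn (cutA n) (cutB n) with hP
  set A := {p : Perm (Fin n) × Perm (Fin n) |
      Subgroup.closure {p.1, p.2} = ⊤ ∨
      Subgroup.closure {p.1, p.2} = alternatingGroup (Fin n)} with hA
  set B := {p : Perm (Fin n) × Perm (Fin n) |
    ¬ IsPreprimitive (Subgroup.closure {p.1, p.2}) (Fin n)} with hB
  set N := (univ.filter (fun x : Perm (Fin n) => ∀ q ∈ P, perPts x q = ∅)) with hN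
  set C : Set (Perm (Fin n) × Perm (Fin n)) := ((N ×ˢ univ : Finset (Perm (Fin n) × Perm (Fin n))) : Set (Perm (Fin n) × Perm (Fin n))) with hC
  set D : Set (Perm (Fin n) × Perm (Fin n)) :=
    ((badPerms (Fin n) P ×ˢ univ : Finset (Perm (Fin n) × Perm (Fin n))) :
      Set (Perm (Fin n) × Perm (Fin n))) with hD
  have hcov : (Set.univ : Set (Perm (Fin n) × Perm (Fin n))) ⊆ A ∪ (B ∪ (C ∪ D)) := by
    intro p _
    by_cases hb : p ∈ B
    · exact Or.inr (Or.inl hb)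
    by_cases hc : p ∈ C
    · exact Or.inr (Or.inr (Or.inl hc))
    by_cases hd : p ∈ D
    · exact Or.inr (Or.inr (Or.inr hd))
    left
    refine good_of_not_bad n hn p (not_not.mp hb) ?_ ?_
    · intro h
      apply hc
      rw [hC, mem_coe, mem_product]
      exact ⟨mem_filter.mpr ⟨mem_univ _, h⟩, mem_univ _⟩
    · intro h
      apply hd
      rw [hD, mem_coe, mem_product]
      exact ⟨h, mem_univ _⟩
  have hP0 : ∀ p ∈ P, 0 < p := fun p hp => (mem_filter.mp hp).2.pos
  have hPn : ∀ p ∈ P, 0 < p ∧ p ≤ Fintype.card (Fin n) := by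
    intro p hp
    refine ⟨hP0 p hp, ?_⟩
    rw [Fintype.card_fin]
    refine ((mem_Ioc.mp (mem_filter.mp hp).1).2.trans ?_).trans
      (Nat.pow_log_le_self 16 (by omega : n ≠ 0))
    exact Nat.pow_le_pow_right (by norm_num) (by unfold cutB; omega)
  have hcard : (Finset.univ : Finset (Perm (Fin n))).card = n.factorial := by
    rw [card_univ, Fintype.card_perm, Fintype.card_fin]
  have htot : (Set.univ : Set (Perm (Fin n) × Perm (Fin n))).ncard = n.factorial ^ 2 := by
    rw [Set.ncard_univ, Nat.card_prod, Nat.card_perm, Nat.card_fin, sq]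
  have hle : n.factorial ^ 2 ≤ A.ncard + (B.ncard + (C.ncard + D.ncard)) := by
    rw [← htot]
    refine (Set.ncard_le_ncard hcov (Set.toFinite _)).trans ?_
    refine (Set.ncard_union_le _ _).trans ?_
    gcongr
    refine (Set.ncard_union_le _ _).trans ?_
    gcongr
    exact Set.ncard_union_le _ _
  have hle' : (n.factorial : ℝ) ^ 2 ≤ A.ncard + (B.ncard + (C.ncard + D.ncard)) := by
    exact_mod_cast hle
  have hBc : (B.ncard : ℝ) ≤ _ := nonprim_pairs n (by omega)
  have hf : (0 : ℝ) ≤ n.factorial := by positivity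
  have hCc : (C.ncard : ℝ) ≤ (n.factorial : ℝ) ^ 2 * (1 / ∑ p ∈ P, (1 / p : ℝ)) := by
    rw [hC, Set.ncard_coe_finset, card_product, hcard, Nat.cast_mul]
    have := noCycle_card (α := Fin n) P hPn hS
    rw [Fintype.card_fin] at this
    calc _ ≤ ((n.factorial : ℝ) / ∑ p ∈ P, (1 / p : ℝ)) * n.factorial :=
          mul_le_mul_of_nonneg_right this hf
      _ = _ := by ring
  have hDc : (D.ncard : ℝ) ≤ (n.factorial : ℝ) ^ 2 *
      ((∑ p ∈ P, ((p : ℝ) ^ 2)⁻¹) * ∑ k ∈ Icc 1 n, (k : ℝ)⁻¹) := by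
    rw [hD, Set.ncard_coe_finset, card_product, hcard, Nat.cast_mul]
    have := badPerms_card (α := Fin n) P hP0
    rw [Fintype.card_fin] at this
    calc _ ≤ _ := mul_le_mul_of_nonneg_right this hf
      _ = _ := by ring
  unfold errTerm
  rw [← hP]
  linarith

theorem dixon_aux : Tendsto (fun n : ℕ => ({p : Perm (Fin n) × Perm (Fin n) |
      Subgroup.closure {p.1, p.2} = ⊤ ∨
      Subgroup.closure {p.1, p.2} = alternatingGroup (Fin n)}.ncard : ℝ) /
      (n.factorial : ℝ) ^ 2) atTop (nhds 1) := by
  have h0 : Tendsto (fun n => 1 - errTerm n) atTop (nhds 1) := by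
    simpa using (tendsto_const_nhds (x := (1 : ℝ))).sub errTerm_tendsto
  refine tendsto_of_tendsto_of_tendsto_of_le_of_le' h0 tendsto_const_nhds ?_ ?_
  · filter_upwards [eventually_ge_atTop 16, recip_tendsto.eventually_gt_atTop 0] with n hn hS
    have := main_bound n hn hS
    rw [le_div_iff₀ (by positivity)]
    linarith
  · refine Eventually.of_forall fun n => ?_
    apply div_le_one_of_le₀ _ (by positivity)
    have h := Set.ncard_le_ncard (Set.subset_univ {p : Perm (Fin n) × Perm (Fin n) |
      Subgroup.closure {p.1, p.2} = ⊤ ∨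
      Subgroup.closure {p.1, p.2} = alternatingGroup (Fin n)}) (Set.toFinite _)
    rw [Set.ncard_univ, Nat.card_prod, Nat.card_perm, Nat.card_fin, ← sq] at h
    exact_mod_cast h

end final

end DixonProof

/-- **Dixon's theorem** (counting form): the proportion of pairs of permutations of
`k` points generating the symmetric group or the alternating group tends to `1`. -/
theorem dixon_theorem :
    Filter.Tendsto
      (fun k : ℕ =>
        (Nat.card {p : Equiv.Perm (Fin k) × Equiv.Perm (Fin k) //
            Subgroup.closure {p.1, p.2} = ⊤ ∨
            Subgroup.closure {p.1, p.2} = alternatingGroup (Fin k)} : ℝ) /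
          (Nat.factorial k : ℝ) ^ 2)
      Filter.atTop (nhds 1) := by
  exact dixon_aux
end

section
/- Let k ≥ 2, m ≥ 1, let n : Fin m → ℕ satisfy 1 ≤ n i for all i, let N be the least common multiple of the n i, and for each i : Fin m let ρ i : ZMod (n i) → Equiv.Perm (Fin k). For i : Fin m and t : ZMod N, let g i t : ZMod N → Equiv.Perm (Fin k) be the N-periodic shifted extension q ↦ ρ i (the image of q + t under the canonical map ZMod N → ZMod (n i), which exists since n i ∣ N). Let G be the subgroup of the direct product (ZMod N → Equiv.Perm (Fin k)) generated by all the elements g i t. Let u : ℤ = Σ over nonempty subsets J of Fin m of (−1)^(|J|+1) · (gcd of the n i for i ∈ J). Then (Nat.card G : ℝ) ≤ (Nat.card (alternatingGroup (Fin k)))^N · (2 : ℝ)^u. -/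
open Polynomial in
lemma aux_degree {m : ℕ} (n : Fin m → ℕ) (hn : ∀ i, 1 ≤ n i) :
    ∃ L : ℤ[X], L.Monic ∧ (∀ i, (X ^ n i - 1 : ℤ[X]) ∣ L) ∧
      (L.natDegree : ℤ) = ∑ J ∈ Finset.univ.powerset.filter (fun J : Finset (Fin m) => J.Nonempty),
      (-1 : ℤ) ^ (J.card + 1) * ((J.gcd n : ℕ) : ℤ) := by
  classical
  refine ⟨∏ d ∈ Finset.univ.biUnion (fun i => (n i).divisors), cyclotomic d ℤ,
    monic_prod_of_monic _ _ fun d _ => cyclotomic.monic d ℤ, fun i => ?_, ?_⟩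
  · rw [← prod_cyclotomic_eq_X_pow_sub_one (hn i)]
    exact Finset.prod_dvd_prod_of_subset _ _ _
      (Finset.subset_biUnion_of_mem (fun i => (n i).divisors) (Finset.mem_univ i))
  · rw [natDegree_prod_of_monic _ _ fun d _ => cyclotomic.monic d ℤ]
    simp only [natDegree_cyclotomic]
    push_cast
    rw [Finset.inclusion_exclusion_sum_biUnion]
    rw [← Finset.sum_coe_sort (Finset.univ.powerset.filter (fun J : Finset (Fin m) => J.Nonempty))]
    refine Finset.sum_congr rfl fun J _ => ?_
    have hJ : J.1.Nonempty := (Finset.mem_filter.1 J.2).2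
    have h : (J.1.inf' hJ fun i => (n i).divisors) = (J.1.gcd n).divisors := by
      ext d
      obtain ⟨i, hi⟩ := id hJ
      have h0 : J.1.gcd n ≠ 0 := fun h => by
        have := Finset.gcd_eq_zero_iff.1 h i hi
        have := hn i
        omega
      rw [Finset.mem_inf']
      simp only [Nat.mem_divisors, Finset.dvd_gcd_iff, h0, ne_eq, not_false_eq_true, and_true]
      exact ⟨fun h i hi => (h i hi).1, fun h i hi => ⟨h i hi, by have := hn i; omega⟩⟩
    rw [h, smul_eq_mul, ← Nat.cast_sum, Nat.sum_totient]

/-- shift operator -/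
def auxShift (N : ℕ) (A : Type*) [AddCommGroup A] : Module.End ℤ (ZMod N → A) where
  toFun f q := f (q + 1)
  map_add' _ _ := rfl
  map_smul' _ _ := rfl

lemma auxShift_pow (N : ℕ) (A : Type*) [AddCommGroup A] (j : ℕ) (f : ZMod N → A) (q : ZMod N) :
    (auxShift N A ^ j) f q = f (q + j) := by
  induction j generalizing q with
  | zero => simp
  | succ j ih =>
    rw [pow_succ', Module.End.mul_apply]
    change (auxShift N A ^ j) f (q + 1) = _
    rw [ih]
    congr 1
    push_cast
    ring

open Polynomial in
lemma aux_ker (N : ℕ) [NeZero N] (A : Type*) [AddCommGroup A] (L : ℤ[X]) (hL : L.Monic)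
    (f : ZMod N → A) (hf : aeval (auxShift N A) L f = 0)
    (h0 : ∀ j < L.natDegree, f (j : ZMod N) = 0) : f = 0 := by
  have key : ∀ j : ℕ, f (j : ZMod N) = 0 := by
    intro j
    induction j using Nat.strong_induction_on with
    | _ j ih =>
      by_cases hj : j < L.natDegree
      · exact h0 j hj
      obtain ⟨a, rfl⟩ := Nat.exists_eq_add_of_le (not_lt.1 hj)
      have := congrFun hf (a : ZMod N)
      rw [aeval_eq_sum_range, Finset.sum_range_succ, hL.coeff_natDegree] at this
      simp only [LinearMap.add_apply, LinearMap.sum_apply, LinearMap.smul_apply, Pi.add_apply,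
        Finset.sum_apply, Pi.smul_apply, auxShift_pow, one_smul, Pi.zero_apply] at this
      rw [Finset.sum_eq_zero, zero_add] at this
      · rw [← this]; congr 1; push_cast; ring
      · intro i hi
        have := ih (a + i) (by have := Finset.mem_range.1 hi; omega)
        push_cast at this
        rw [this, smul_zero]
  funext q
  have := key q.val
  rwa [ZMod.natCast_zmod_val] at this

open Polynomial in
lemma aux_card_ker (N : ℕ) [NeZero N] (A : Type*) [AddCommGroup A] [Finite A] (L : ℤ[X])
    (hL : L.Monic) :
    Nat.card (LinearMap.ker (aeval (auxShift N A) L)) ≤ Nat.card A ^ L.natDegree := by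
  have : Nat.card (Fin L.natDegree → A) = Nat.card A ^ L.natDegree := by
    simp [Nat.card_fun]
  rw [← this]
  refine Nat.card_le_card_of_injective
    (fun f j => f.1 ((j : ℕ) : ZMod N)) ?_
  intro f g hfg
  have h : f - g = 0 := by
    apply Subtype.ext
    refine aux_ker N A L hL _ (f - g).2 ?_
    intro j hj
    have := congrFun hfg ⟨j, hj⟩
    simpa [sub_eq_zero] using this
  exact sub_eq_zero.1 h

/-- sign vector -/
def auxSign (N k : ℕ) (x : ZMod N → Equiv.Perm (Fin k)) : ZMod N → Additive ℤˣ :=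
  fun q => Additive.ofMul (Equiv.Perm.sign (x q))

lemma aux_card (N k : ℕ) [NeZero N] (hk : 2 ≤ k) (G : Subgroup (ZMod N → Equiv.Perm (Fin k)))
    (K : Submodule ℤ (ZMod N → Additive ℤˣ)) (h : ∀ x ∈ G, auxSign N k x ∈ K) :
    Nat.card G ≤ Nat.card (alternatingGroup (Fin k)) ^ N * Nat.card K := by
  classical
  have : Nat.card ((ZMod N → alternatingGroup (Fin k)) × K) =
      Nat.card (alternatingGroup (Fin k)) ^ N * Nat.card K := by
    rw [Nat.card_prod, Nat.card_fun, Nat.card_zmod]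
  rw [← this]
  obtain ⟨τ, hτ⟩ : ∃ τ : Equiv.Perm (Fin k), Equiv.Perm.sign τ = -1 :=
    ⟨Equiv.swap ⟨0, by omega⟩ ⟨1, by omega⟩, Equiv.Perm.sign_swap (by simp)⟩
  refine Nat.card_le_card_of_injective (fun x : G =>
    ((fun q => if hq : Equiv.Perm.sign (x.1 q) = 1 then ⟨x.1 q, hq⟩ else ⟨τ * x.1 q, by
      rw [Equiv.Perm.mem_alternatingGroup, Equiv.Perm.sign_mul, hτ,
        (Int.units_eq_one_or _).resolve_left hq]; rfl⟩), ⟨auxSign N k x.1, h _ x.2⟩)) ?_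
  intro x y hxy
  rw [Prod.mk.injEq] at hxy
  obtain ⟨h1, h2⟩ := hxy
  apply Subtype.ext
  funext q
  have h1 := congrArg Subtype.val (congrFun h1 q)
  have h2 : Equiv.Perm.sign (x.1 q) = Equiv.Perm.sign (y.1 q) :=
    Additive.ofMul.injective (congrFun (congrArg Subtype.val h2) q)
  by_cases hq : Equiv.Perm.sign (x.1 q) = 1
  · have hq' := h2 ▸ hq
    simpa [hq, hq'] using h1
  · have hq' := h2 ▸ hq
    simpa [hq, hq'] using h1

/-- Bound on the order of the group generated by a disjoint union of cyclic Mealy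
automata with `n 0, …, n (m-1)` states over a `k`-letter alphabet. -/
theorem card_le_of_disjoint_union_of_cyclic (k m : ℕ) (hk : 2 ≤ k) (hm : 1 ≤ m)
    (n : Fin m → ℕ) (hn : ∀ i, 1 ≤ n i)
    (N : ℕ) (hN : N = Finset.univ.lcm n)
    (hdvd : ∀ i, n i ∣ N)
    (ρ : ∀ i : Fin m, ZMod (n i) → Equiv.Perm (Fin k))
    (g : Fin m → ZMod N → ZMod N → Equiv.Perm (Fin k))
    (hg : ∀ (i : Fin m) (t q : ZMod N),
      g i t q = ρ i (ZMod.castHom (hdvd i) (ZMod (n i)) (q + t)))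
    (G : Subgroup (ZMod N → Equiv.Perm (Fin k)))
    (hG : G = Subgroup.closure (Set.range fun p : Fin m × ZMod N => g p.1 p.2))
    (u : ℤ)
    (hu : u = ∑ J ∈ Finset.univ.powerset.filter (fun J : Finset (Fin m) => J.Nonempty),
      (-1 : ℤ) ^ (J.card + 1) * ((J.gcd n : ℕ) : ℤ)) :
    (Nat.card G : ℝ) ≤ (Nat.card (alternatingGroup (Fin k)) : ℝ) ^ N * (2 : ℝ) ^ u := by
  have hN0 : N ≠ 0 := by
    rw [hN]
    intro h
    obtain ⟨i, -, hi⟩ := Finset.lcm_eq_zero_iff.1 h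
    have := hn i
    omega
  have : NeZero N := ⟨hN0⟩
  obtain ⟨L, hL, hdiv, hdeg⟩ := aux_degree n hn
  rw [← hdeg] at hu
  have hmem : ∀ x ∈ G, auxSign N k x ∈
      LinearMap.ker (Polynomial.aeval (auxShift N (Additive ℤˣ)) L) := by
    intro x hx
    rw [hG] at hx
    induction hx using Subgroup.closure_induction with
    | mem x hx =>
      obtain ⟨⟨i, t⟩, rfl⟩ := hx
      obtain ⟨Q, hQ⟩ := hdiv i
      rw [LinearMap.mem_ker, hQ, mul_comm, map_mul, Module.End.mul_apply]
      convert LinearMap.map_zero _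
      simp only [map_sub, map_pow, Polynomial.aeval_X, map_one, LinearMap.sub_apply,
        Module.End.one_apply]
      rw [sub_eq_zero]
      funext q
      rw [auxShift_pow]
      simp only [auxSign, hg]
      congr 3
      simp only [map_add, map_natCast, ZMod.natCast_self, add_zero]
    | one =>
      convert Submodule.zero_mem _
      funext q
      simp [auxSign]
    | mul x y _ _ hx hy =>
      convert Submodule.add_mem _ hx hy
      funext q
      simp [auxSign]
    | inv x _ hx =>
      convert Submodule.neg_mem _ hx
      funext q
      exact congrArg Additive.ofMul (map_inv Equiv.Perm.sign (x q))
  have h1 := aux_card N k hk G _ hmem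
  have h2 := aux_card_ker N (Additive ℤˣ) L hL
  have h3 : Nat.card (Additive ℤˣ) = 2 := by
    rw [Nat.card_congr Additive.toMul, Nat.card_eq_fintype_card, Fintype.card_units_int]
  rw [h3] at h2
  rw [hu, zpow_natCast]
  exact_mod_cast h1.trans (Nat.mul_le_mul_left _ h2)
end

section
/- Let σ, τ ∈ Equiv.Perm (Fin k) with Nat.Coprime (orderOf σ) (orderOf τ). Then the group circularly generated by the pair (σ, τ) equals the direct product (Subgroup.closure {σ, τ}).prod (Subgroup.closure {σ, τ}) inside Equiv.Perm (Fin k) × Equiv.Perm (Fin k). -/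
/-- The group circularly generated by a pair `(σ, τ)` of permutations: the subgroup
of `Equiv.Perm (Fin k) × Equiv.Perm (Fin k)` generated by `(σ, τ)` and `(τ, σ)`. -/
def circGenPair {k : ℕ} (σ τ : Equiv.Perm (Fin k)) :
    Subgroup (Equiv.Perm (Fin k) × Equiv.Perm (Fin k)) :=
  Subgroup.closure {(σ, τ), (τ, σ)}

/-- For elements of coprime orders, some power fixes the first and kills the second. -/
theorem exists_zpow_eq_self_and_one {G : Type*} [Group G] (x y : G)
    (h : Nat.Coprime (orderOf x) (orderOf y)) : ∃ n : ℤ, x ^ n = x ∧ y ^ n = 1 := by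
  have hb := Nat.gcd_eq_gcd_ab (orderOf x) (orderOf y)
  rw [Nat.Coprime.gcd_eq_one h] at hb
  refine ⟨orderOf y * Nat.gcdB (orderOf x) (orderOf y), ?_, ?_⟩
  · have e : (orderOf y : ℤ) * Nat.gcdB (orderOf x) (orderOf y)
        = 1 - orderOf x * Nat.gcdA (orderOf x) (orderOf y) := by
      push_cast at hb
      linarith
    rw [e, zpow_sub, zpow_mul, zpow_natCast, pow_orderOf_eq_one]
    simp
  · rw [zpow_mul, zpow_natCast, pow_orderOf_eq_one, one_zpow]

/-- If `σ` and `τ` have coprime orders, the group circularly generated by `(σ, τ)` is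
the full direct product `⟨σ, τ⟩ × ⟨σ, τ⟩`. -/
theorem circGenPair_eq_prod_of_coprime_orders {k : ℕ} (σ τ : Equiv.Perm (Fin k))
    (h : Nat.Coprime (orderOf σ) (orderOf τ)) :
    circGenPair σ τ = (Subgroup.closure {σ, τ}).prod (Subgroup.closure {σ, τ}) := by
  unfold circGenPair
  have hσ : σ ∈ Subgroup.closure {σ, τ} := Subgroup.subset_closure (by simp)
  have hτ : τ ∈ Subgroup.closure {σ, τ} := Subgroup.subset_closure (by simp)
  have h1 : (σ, τ) ∈ Subgroup.closure {(σ, τ), (τ, σ)} := Subgroup.subset_closure (by simp)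
  have h2 : (τ, σ) ∈ Subgroup.closure {(σ, τ), (τ, σ)} := Subgroup.subset_closure (by simp)
  obtain ⟨n, hn, hn'⟩ := exists_zpow_eq_self_and_one σ τ h
  obtain ⟨m, hm, hm'⟩ := exists_zpow_eq_self_and_one τ σ h.symm
  apply le_antisymm
  · rw [Subgroup.closure_le]
    rintro p (rfl | rfl)
    · exact Subgroup.mem_prod.2 ⟨hσ, hτ⟩
    · exact Subgroup.mem_prod.2 ⟨hτ, hσ⟩
  · have a1 := Subgroup.zpow_mem _ h1 n
    have a2 := Subgroup.zpow_mem _ h2 n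
    have b1 := Subgroup.zpow_mem _ h1 m
    have b2 := Subgroup.zpow_mem _ h2 m
    rw [Prod.pow_mk, hn, hn'] at a1 a2
    rw [Prod.pow_mk, hm, hm'] at b1 b2
    rw [Subgroup.prod_le_iff, Subgroup.map_le_iff_le_comap, Subgroup.map_le_iff_le_comap,
      Subgroup.closure_le, Subgroup.closure_le]
    constructor
    · rintro p (rfl | rfl)
      · exact a1
      · exact b2
    · rintro p (rfl | rfl)
      · exact a2
      · exact b1
end

section
/- Let σ, τ ∈ Equiv.Perm (Fin k), let G be the group circularly generated by the pair (σ, τ), and suppose (1, π) ∈ G for some π ∈ Equiv.Perm (Fin k). Then for every ρ ∈ Subgroup.closure {σ, τ}, the element (1, ρ⁻¹ * π * ρ) also belongs to G. -/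
/-- If `(1, π)` belongs to the group circularly generated by `(σ, τ)`, then so does
`(1, ρ⁻¹ * π * ρ)` for every `ρ ∈ ⟨σ, τ⟩`. -/
theorem one_conj_mem_circGenPair {k : ℕ} (σ τ π : Equiv.Perm (Fin k))
    (hπ : (1, π) ∈ circGenPair σ τ) :
    ∀ ρ ∈ Subgroup.closure {σ, τ}, (1, ρ⁻¹ * π * ρ) ∈ circGenPair σ τ := by
  intro ρ hρ
  have key : Subgroup.closure {σ, τ} ≤
      (circGenPair σ τ).map (MonoidHom.snd (Equiv.Perm (Fin k)) (Equiv.Perm (Fin k))) := by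
    rw [Subgroup.closure_le]
    rintro x (rfl | rfl)
    · exact ⟨(τ, x), Subgroup.subset_closure (Or.inr rfl), rfl⟩
    · exact ⟨(σ, x), Subgroup.subset_closure (Or.inl rfl), rfl⟩
  obtain ⟨⟨a, b⟩, hab, rfl⟩ := key hρ
  have h := mul_mem (mul_mem (inv_mem hab) hπ) hab
  simpa using h
end

section
/- Let k ≥ 5 and let σ, τ ∈ Equiv.Perm (Fin k) be permutations with orderOf σ ≠ orderOf τ such that Subgroup.closure {σ, τ} = ⊤ or Subgroup.closure {σ, τ} = alternatingGroup (Fin k). Then there exists a prime p and a p-cycle π ∈ Equiv.Perm (Fin k) such that (1, π) belongs to the group circularly generated by the pair (σ, τ). -/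
/-- If `σ` and `τ` have different orders and generate `S_k` or `A_k`, then the group
circularly generated by `(σ, τ)` contains `(1, π)` for some prime-length cycle `π`. -/
theorem exists_cycle_mem_circGenPair {k : ℕ} (hk : 5 ≤ k)
    (σ τ : Equiv.Perm (Fin k)) (horder : orderOf σ ≠ orderOf τ)
    (hgen : Subgroup.closure {σ, τ} = ⊤ ∨
      Subgroup.closure {σ, τ} = alternatingGroup (Fin k)) :
    ∃ (p : ℕ) (π : Equiv.Perm (Fin k)), p.Prime ∧ π.IsCycle ∧ π.support.card = p ∧
      (1, π) ∈ circGenPair σ τ := by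
  set G := circGenPair σ τ with hG
  set N : Subgroup (Equiv.Perm (Fin k)) := G.comap (MonoidHom.inr _ _) with hN
  have hmemN : ∀ x, x ∈ N ↔ ((1 : Equiv.Perm (Fin k)), x) ∈ G := fun x => Iff.rfl
  have h1 : (σ, τ) ∈ G := Subgroup.subset_closure (by simp)
  have h2 : (τ, σ) ∈ G := Subgroup.subset_closure (by simp)
  have hcard : 5 ≤ Nat.card (Fin k) := by simpa using hk
  -- the second projection of `G` is the group generated by `σ, τ`
  have hmap : G.map (MonoidHom.snd _ _) = Subgroup.closure {σ, τ} := by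
    rw [hG, circGenPair, MonoidHom.map_closure, Set.image_pair]
    simp [Set.pair_comm]
  have hconj : ∀ g ∈ Subgroup.closure {σ, τ}, ∀ n ∈ N, g * n * g⁻¹ ∈ N := by
    intro g hg n hn
    rw [← hmap] at hg
    obtain ⟨⟨a, b⟩, hab, rfl⟩ := hg
    rw [hmemN] at hn ⊢
    have := G.mul_mem (G.mul_mem hab hn) (G.inv_mem hab)
    simpa using this
  have hNle : N ≤ Subgroup.closure {σ, τ} := by
    intro n hn
    rw [← hmap]
    exact ⟨(1, n), hn, rfl⟩
  -- `N` is nontrivial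
  have hNbot : ∃ n ∈ N, n ≠ 1 := by
    by_contra! hcon
    apply horder
    apply Nat.dvd_antisymm
    · apply orderOf_dvd_of_pow_eq_one
      apply hcon
      rw [hmemN]
      simpa [pow_orderOf_eq_one] using G.pow_mem h2 (orderOf τ)
    · apply orderOf_dvd_of_pow_eq_one
      apply hcon
      rw [hmemN]
      simpa [pow_orderOf_eq_one] using G.pow_mem h1 (orderOf σ)
  obtain ⟨n, hn, hn1⟩ := hNbot
  have hle : alternatingGroup (Fin k) ≤ N := by
    rcases hgen with hgen | hgen
    · have hnorm : N.Normal := ⟨fun n hn g => hconj g (by rw [hgen]; trivial) n hn⟩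
      have hnt : Nontrivial N := (Subgroup.nontrivial_iff_exists_ne_one N).2 ⟨n, hn, hn1⟩
      exact Equiv.Perm.alternatingGroup_le_of_normal hcard hnt
    · rw [hgen] at hconj hNle
      have hnorm : (N.subgroupOf (alternatingGroup (Fin k))).Normal :=
        ⟨fun n hn g => hconj g g.2 n hn⟩
      rcases alternatingGroup.normal_subgroup_eq_bot_or_eq_top hcard
        (N := N.subgroupOf (alternatingGroup (Fin k))) with h | h
      · exfalso
        have hb : (⟨n, hNle hn⟩ : alternatingGroup (Fin k)) ∈
            N.subgroupOf (alternatingGroup (Fin k)) := hn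
        rw [h, Subgroup.mem_bot] at hb
        exact hn1 (congrArg Subtype.val hb)
      · exact Subgroup.subgroupOf_eq_top.1 h
  let a : Fin k := ⟨0, by omega⟩
  let b : Fin k := ⟨1, by omega⟩
  let c : Fin k := ⟨2, by omega⟩
  have h3 : (Equiv.swap a b * Equiv.swap a c).IsThreeCycle :=
    Equiv.Perm.isThreeCycle_swap_mul_swap_same (by simp [a, b]) (by simp [a, c])
      (by simp [b, c])
  exact ⟨3, _, Nat.prime_three, h3.isCycle, h3.card_support, hle h3.mem_alternatingGroup⟩
end

section
/- Let k > 5 and let σ, τ ∈ Equiv.Perm (Fin k) satisfy orderOf σ ≠ orderOf τ, Subgroup.closure {σ, τ} = ⊤ or Subgroup.closure {σ, τ} = alternatingGroup (Fin k), and Equiv.Perm.sign σ ≠ Equiv.Perm.sign τ. Then the group circularly generated by the pair (σ, τ) is the whole group: G_c(σ, τ) = ⊤ (i.e. it equals S_k × S_k). -/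
/-- If `σ, τ` have different orders, generate `S_k` or `A_k`, and have different
signatures, then the group circularly generated by `(σ, τ)` is all of `S_k × S_k`. -/
theorem circGenPair_eq_top {k : ℕ} (hk : 5 < k)
    (σ τ : Equiv.Perm (Fin k)) (horder : orderOf σ ≠ orderOf τ)
    (hgen : Subgroup.closure {σ, τ} = ⊤ ∨
      Subgroup.closure {σ, τ} = alternatingGroup (Fin k))
    (hsgn : Equiv.Perm.sign σ ≠ Equiv.Perm.sign τ) :
    circGenPair σ τ = ⊤ := by
  have hst : (σ, τ) ∈ circGenPair σ τ := Subgroup.subset_closure (by simp)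
  have hts : (τ, σ) ∈ circGenPair σ τ := Subgroup.subset_closure (by simp)
  -- the two signs differ, so the generated group is the full symmetric group
  have htop : Subgroup.closure {σ, τ} = ⊤ := by
    rcases hgen with h | h
    · exact h
    · exfalso
      have h1 : σ ∈ alternatingGroup (Fin k) := h ▸ Subgroup.subset_closure (by simp)
      have h2 : τ ∈ alternatingGroup (Fin k) := h ▸ Subgroup.subset_closure (by simp)
      rw [Equiv.Perm.mem_alternatingGroup] at h1 h2
      exact hsgn (h1.trans h2.symm)
  -- the swap of factors preserves the group
  have hswap : ∀ x ∈ circGenPair σ τ, x.swap ∈ circGenPair σ τ := by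
    intro x hx
    have hle : circGenPair σ τ ≤ (circGenPair σ τ).comap
        (MulEquiv.prodComm : _ ≃* Equiv.Perm (Fin k) × Equiv.Perm (Fin k)).toMonoidHom := by
      conv_lhs => unfold circGenPair
      rw [Subgroup.closure_le]
      rintro y (rfl | rfl)
      · exact hts
      · exact hst
    exact hle hx
  -- the first projection is surjective
  have hsurj : ∀ g : Equiv.Perm (Fin k), ∃ h, (g, h) ∈ circGenPair σ τ := by
    intro g
    have hle : Subgroup.closure {σ, τ} ≤ (circGenPair σ τ).map (MonoidHom.fst _ _) := by
      rw [Subgroup.closure_le]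
      rintro y (rfl | rfl)
      · exact ⟨_, hst, rfl⟩
      · exact ⟨_, hts, rfl⟩
    rw [htop] at hle
    obtain ⟨⟨a, b⟩, hab, rfl⟩ := hle (Subgroup.mem_top g)
    exact ⟨b, hab⟩
  let N : Subgroup (Equiv.Perm (Fin k)) := (circGenPair σ τ).comap (MonoidHom.inl _ _)
  have hmem : ∀ g, g ∈ N ↔ (g, 1) ∈ circGenPair σ τ := fun g => Iff.rfl
  have hN : N.Normal := by
    constructor
    intro n hn g
    obtain ⟨h, hh⟩ := hsurj g
    rw [hmem] at hn ⊢
    have := mul_mem (mul_mem hh hn) (inv_mem hh)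
    simpa using this
  have hnt : Nontrivial N := by
    rw [Subgroup.nontrivial_iff_ne_bot]
    intro hbot
    have key : ∀ g, (g, 1) ∈ circGenPair σ τ → g = 1 := by
      intro g hg
      rw [← hmem, hbot] at hg
      exact Subgroup.mem_bot.1 hg
    apply horder
    apply Nat.dvd_antisymm
    · apply orderOf_dvd_of_pow_eq_one
      apply key
      have := pow_mem hst (orderOf τ)
      simpa [pow_orderOf_eq_one] using this
    · apply orderOf_dvd_of_pow_eq_one
      apply key
      have := pow_mem hts (orderOf σ)
      simpa [pow_orderOf_eq_one] using this
  have hA : alternatingGroup (Fin k) ≤ N :=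
    Equiv.Perm.alternatingGroup_le_of_normal (by simp; omega) hnt
  have hsign : ∀ a b : Equiv.Perm (Fin k), ∃ c d, (c, d) ∈ circGenPair σ τ ∧
      Equiv.Perm.sign c = Equiv.Perm.sign a ∧ Equiv.Perm.sign d = Equiv.Perm.sign b := by
    intro a b
    have h11 := one_mem (circGenPair σ τ)
    have hmm := mul_mem hst hts
    rcases Int.units_eq_one_or (Equiv.Perm.sign a) with ha | ha <;>
    rcases Int.units_eq_one_or (Equiv.Perm.sign b) with hb | hb <;>
    rcases Int.units_eq_one_or (Equiv.Perm.sign σ) with hs | hs <;>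
    rcases Int.units_eq_one_or (Equiv.Perm.sign τ) with ht | ht <;>
    first
    | exact absurd (hs.trans ht.symm) hsgn
    | (refine ⟨1, 1, h11, ?_, ?_⟩ <;> simp [hs, ht, ha, hb] <;> done)
    | (refine ⟨σ, τ, hst, ?_, ?_⟩ <;> simp [hs, ht, ha, hb] <;> done)
    | (refine ⟨τ, σ, hts, ?_, ?_⟩ <;> simp [hs, ht, ha, hb] <;> done)
    | (refine ⟨σ * τ, τ * σ, hmm, ?_, ?_⟩ <;> simp [hs, ht, ha, hb] <;> done)
  rw [eq_top_iff]
  rintro ⟨a, b⟩ -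
  obtain ⟨c, d, hcd, hc, hd⟩ := hsign a b
  have h1 : (a * c⁻¹, 1) ∈ circGenPair σ τ :=
    hA (Equiv.Perm.mem_alternatingGroup.2 (by simp [hc]))
  have h2 : (b * d⁻¹, 1) ∈ circGenPair σ τ :=
    hA (Equiv.Perm.mem_alternatingGroup.2 (by simp [hd]))
  have := mul_mem (mul_mem h1 (hswap _ h2)) hcd
  simpa using this
end

section
/- Let k > 5 and let σ, τ ∈ Equiv.Perm (Fin k) satisfy orderOf σ ≠ orderOf τ, Subgroup.closure {σ, τ} = ⊤ or Subgroup.closure {σ, τ} = alternatingGroup (Fin k), and Equiv.Perm.sign σ = −1 and Equiv.Perm.sign τ = −1. Then the group circularly generated by the pair (σ, τ) equals the equal-sign subgroup {(a, b) : Equiv.Perm.sign a = Equiv.Perm.sign b} of Equiv.Perm (Fin k) × Equiv.Perm (Fin k) (which is the internal semidirect product (A_k × A_k) ⋊ ⟨(π, π)⟩ for any transposition π). -/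
/-- The equal-sign subgroup of `S_k × S_k`: the kernel of `(a, b) ↦ sign a * sign b`,
i.e. the pairs of permutations with equal signatures. It is the internal semidirect
product `(A_k × A_k) ⋊ ⟨(π, π)⟩` for any transposition `π`. -/
def equalSignSubgroup (k : ℕ) : Subgroup (Equiv.Perm (Fin k) × Equiv.Perm (Fin k)) :=
  MonoidHom.ker
    ((Equiv.Perm.sign.comp (MonoidHom.fst (Equiv.Perm (Fin k)) (Equiv.Perm (Fin k)))) *
      (Equiv.Perm.sign.comp (MonoidHom.snd (Equiv.Perm (Fin k)) (Equiv.Perm (Fin k)))))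

/-- If `σ, τ` have different orders, generate `S_k` or `A_k`, and are both odd, then the
group circularly generated by `(σ, τ)` is the equal-sign subgroup of `S_k × S_k`. -/
theorem circGenPair_eq_equalSign {k : ℕ} (hk : 5 < k)
    (σ τ : Equiv.Perm (Fin k)) (horder : orderOf σ ≠ orderOf τ)
    (hgen : Subgroup.closure {σ, τ} = ⊤ ∨
      Subgroup.closure {σ, τ} = alternatingGroup (Fin k))
    (hσ : Equiv.Perm.sign σ = -1) (hτ : Equiv.Perm.sign τ = -1) :
    circGenPair σ τ = equalSignSubgroup k := by
  have hcl : Subgroup.closure {σ, τ} = ⊤ := by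
    rcases hgen with h | h
    · exact h
    · exfalso
      have h1 : σ ∈ Subgroup.closure {σ, τ} := Subgroup.subset_closure (by simp)
      rw [h, Equiv.Perm.mem_alternatingGroup, hσ] at h1
      exact absurd h1 (by decide)
  have hm1 : (σ, τ) ∈ circGenPair σ τ := Subgroup.subset_closure (by simp)
  have hm2 : (τ, σ) ∈ circGenPair σ τ := Subgroup.subset_closure (by simp)
  have hle : circGenPair σ τ ≤ equalSignSubgroup k := by
    unfold circGenPair
    rw [Subgroup.closure_le]
    rintro x (rfl | rfl) <;> simp [equalSignSubgroup, MonoidHom.mem_ker, hσ, hτ]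
  -- invariance under swapping the factors
  have hswap : ∀ a b, (a, b) ∈ circGenPair σ τ → (b, a) ∈ circGenPair σ τ := by
    have : circGenPair σ τ ≤ (circGenPair σ τ).comap
        (MulEquiv.prodComm : Equiv.Perm (Fin k) × Equiv.Perm (Fin k) ≃* _).toMonoidHom := by
      conv_lhs => unfold circGenPair
      rw [Subgroup.closure_le]
      rintro x (rfl | rfl)
      · exact hm2
      · exact hm1
    intro a b h
    exact this h
  -- the first projection is surjective
  have hfst : ∀ a, ∃ c, (a, c) ∈ circGenPair σ τ := by
    have : (⊤ : Subgroup (Equiv.Perm (Fin k))) ≤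
        (circGenPair σ τ).map (MonoidHom.fst _ _) := by
      rw [← hcl, Subgroup.closure_le]
      rintro x (rfl | rfl)
      · exact ⟨_, hm1, rfl⟩
      · exact ⟨_, hm2, rfl⟩
    intro a
    obtain ⟨⟨x, c⟩, h, rfl⟩ := this (Subgroup.mem_top a)
    exact ⟨c, h⟩
  -- the kernel of the second projection
  let N : Subgroup (Equiv.Perm (Fin k)) := (circGenPair σ τ).comap (MonoidHom.inl _ _)
  have hN : ∀ a, a ∈ N ↔ (a, 1) ∈ circGenPair σ τ := fun a => Iff.rfl
  have hNn : N.Normal := by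
    constructor
    intro n hn g
    obtain ⟨c, hc⟩ := hfst g
    rw [hN] at hn ⊢
    simpa using mul_mem (mul_mem hc hn) (inv_mem hc)
  have hdvd : N = ⊥ → ∀ a b, (a, b) ∈ circGenPair σ τ → orderOf a ∣ orderOf b := by
    intro hb a b hab
    rw [orderOf_dvd_iff_pow_eq_one]
    have h1 := pow_mem hab (orderOf b)
    rw [Prod.pow_mk, pow_orderOf_eq_one, ← hN, hb] at h1
    simpa using h1
  have hNbot : N ≠ ⊥ := fun hb =>
    horder (Nat.dvd_antisymm (hdvd hb _ _ hm1) (hdvd hb _ _ hm2))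
  have hA : alternatingGroup (Fin k) ≤ N := by
    apply Equiv.Perm.alternatingGroup_le_of_normal
    · simp; omega
    · exact (Subgroup.nontrivial_iff_ne_bot N).2 hNbot
  refine le_antisymm hle ?_
  rintro ⟨a, b⟩ hab
  obtain ⟨c, hc⟩ := hfst a
  have hc' := hle hc
  simp only [equalSignSubgroup, MonoidHom.mem_ker, MonoidHom.mul_apply, MonoidHom.comp_apply,
    MonoidHom.coe_fst, MonoidHom.coe_snd] at hab hc'
  have hcb : c⁻¹ * b ∈ alternatingGroup (Fin k) := by
    rw [Equiv.Perm.mem_alternatingGroup, map_mul, map_inv]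
    rw [mul_left_cancel (hab.trans hc'.symm)]
    simp
  simpa using mul_mem hc (hswap _ _ ((hN _).1 (hA hcb)))
end

section
/- Let k > 5 and let σ, τ ∈ Equiv.Perm (Fin k) satisfy orderOf σ ≠ orderOf τ, Subgroup.closure {σ, τ} = ⊤ or Subgroup.closure {σ, τ} = alternatingGroup (Fin k), and Equiv.Perm.sign σ = 1 and Equiv.Perm.sign τ = 1. Then the group circularly generated by the pair (σ, τ) equals (alternatingGroup (Fin k)).prod (alternatingGroup (Fin k)), i.e. A_k × A_k. -/
theorem circGenPair_swap_mem {k : ℕ} (σ τ : Equiv.Perm (Fin k))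
    {p : Equiv.Perm (Fin k) × Equiv.Perm (Fin k)} (hp : p ∈ circGenPair σ τ) :
    p.swap ∈ circGenPair σ τ := by
  unfold circGenPair at *
  induction hp using Subgroup.closure_induction with
  | mem x hx =>
    rcases hx with rfl | hx
    · exact Subgroup.subset_closure (by simp)
    · rw [Set.mem_singleton_iff] at hx
      subst hx
      exact Subgroup.subset_closure (by simp)
  | one => exact Subgroup.one_mem _
  | mul x y _ _ hx hy => exact Subgroup.mul_mem _ hx hy
  | inv x _ hx => exact Subgroup.inv_mem _ hx

theorem circGenPair_exists_snd {k : ℕ} (σ τ : Equiv.Perm (Fin k))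
    {g : Equiv.Perm (Fin k)} (hg : g ∈ Subgroup.closure {σ, τ}) :
    ∃ h, (g, h) ∈ circGenPair σ τ := by
  unfold circGenPair
  induction hg using Subgroup.closure_induction with
  | mem x hx =>
    rcases hx with rfl | hx
    · exact ⟨τ, Subgroup.subset_closure (by simp)⟩
    · rw [Set.mem_singleton_iff] at hx
      subst hx
      exact ⟨σ, Subgroup.subset_closure (by simp)⟩
  | one => exact ⟨1, Subgroup.one_mem _⟩
  | mul x y _ _ hx hy =>
    obtain ⟨a, ha⟩ := hx
    obtain ⟨b, hb⟩ := hy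
    exact ⟨a * b, Subgroup.mul_mem _ ha hb⟩
  | inv x _ hx =>
    obtain ⟨a, ha⟩ := hx
    exact ⟨a⁻¹, Subgroup.inv_mem _ ha⟩

/-- If `σ, τ` have different orders, generate `S_k` or `A_k`, and are both even, then the
group circularly generated by `(σ, τ)` equals `A_k × A_k`. -/
theorem circGenPair_eq_alternating_prod {k : ℕ} (hk : 5 < k)
    (σ τ : Equiv.Perm (Fin k)) (horder : orderOf σ ≠ orderOf τ)
    (hgen : Subgroup.closure {σ, τ} = ⊤ ∨
      Subgroup.closure {σ, τ} = alternatingGroup (Fin k))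
    (hσ : Equiv.Perm.sign σ = 1) (hτ : Equiv.Perm.sign τ = 1) :
    circGenPair σ τ = (alternatingGroup (Fin k)).prod (alternatingGroup (Fin k)) := by
  have hle : Subgroup.closure {σ, τ} ≤ alternatingGroup (Fin k) := by
    rw [Subgroup.closure_le]
    rintro x (rfl | hx)
    · exact Equiv.Perm.mem_alternatingGroup.2 hσ
    · rw [Set.mem_singleton_iff] at hx
      subst hx
      exact Equiv.Perm.mem_alternatingGroup.2 hτ
  have hA : Subgroup.closure {σ, τ} = alternatingGroup (Fin k) := by
    rcases hgen with h | h
    · refine le_antisymm hle ?_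
      rw [h]
      exact le_top
    · exact h
  have hsimple : IsSimpleGroup (alternatingGroup (Fin k)) :=
    alternatingGroup.isSimpleGroup (by simp; omega)
  have hHle : circGenPair σ τ ≤ (alternatingGroup (Fin k)).prod (alternatingGroup (Fin k)) := by
    unfold circGenPair
    rw [Subgroup.closure_le]
    rintro x (rfl | hx)
    · exact ⟨Equiv.Perm.mem_alternatingGroup.2 hσ, Equiv.Perm.mem_alternatingGroup.2 hτ⟩
    · rw [Set.mem_singleton_iff] at hx
      subst hx
      exact ⟨Equiv.Perm.mem_alternatingGroup.2 hτ, Equiv.Perm.mem_alternatingGroup.2 hσ⟩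
  let N : Subgroup (alternatingGroup (Fin k)) :=
    (circGenPair σ τ).comap
      ((MonoidHom.inl (Equiv.Perm (Fin k)) (Equiv.Perm (Fin k))).comp
        (alternatingGroup (Fin k)).subtype)
  have hmem : ∀ n : alternatingGroup (Fin k),
      n ∈ N ↔ ((n : Equiv.Perm (Fin k)), (1 : Equiv.Perm (Fin k))) ∈ circGenPair σ τ :=
    fun n => Iff.rfl
  have hN : N.Normal := by
    refine ⟨fun n hn g => ?_⟩
    rw [hmem] at hn ⊢
    obtain ⟨h, hh⟩ := circGenPair_exists_snd σ τ (hA.ge g.2)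
    have := Subgroup.mul_mem _ (Subgroup.mul_mem _ hh hn) (Subgroup.inv_mem _ hh)
    simpa using this
  have h1 : (σ, τ) ∈ circGenPair σ τ := Subgroup.subset_closure (by simp)
  rcases hN.eq_bot_or_eq_top with hbot | htop
  · exfalso
    have key : ∀ g, (g, (1 : Equiv.Perm (Fin k))) ∈ circGenPair σ τ → g = 1 := by
      intro g hg
      have : (⟨g, (hHle hg).1⟩ : alternatingGroup (Fin k)) ∈ N := hg
      rw [hbot, Subgroup.mem_bot] at this
      exact congrArg Subtype.val this
    apply horder
    apply Nat.dvd_antisymm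
    · apply orderOf_dvd_of_pow_eq_one
      apply key
      have := Subgroup.pow_mem _ h1 (orderOf τ)
      rwa [Prod.pow_mk, pow_orderOf_eq_one] at this
    · apply orderOf_dvd_of_pow_eq_one
      apply key
      have := circGenPair_swap_mem σ τ (Subgroup.pow_mem _ h1 (orderOf σ))
      rwa [Prod.pow_mk, pow_orderOf_eq_one] at this
  · refine le_antisymm hHle ?_
    have all : ∀ g ∈ alternatingGroup (Fin k),
        (g, (1 : Equiv.Perm (Fin k))) ∈ circGenPair σ τ := by
      intro g hg
      have : (⟨g, hg⟩ : alternatingGroup (Fin k)) ∈ N := by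
        rw [htop]
        exact Subgroup.mem_top _
      exact this
    rintro ⟨a, b⟩ ⟨ha, hb⟩
    have := Subgroup.mul_mem _ (all a ha) (circGenPair_swap_mem σ τ (all b hb))
    simpa using this
end
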